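/- arXiv:1708.07646 — 2 statements merged into one kernel-verified Lean document; each statement's English description precedes it below -/
import Mathlib

section
/- There exists an anti-Pasch maximum partial triple system of order 17 of Type-Q, and there exists an anti-Pasch maximum partial triple system of order 17 of Type-N. -/
def isPTS {n : ℕ} (B : Finset (Finset (Fin n))) : Prop :=
  (∀ T ∈ B, T.card = 3) ∧
  ∀ p : Finset (Fin n), p.card = 2 → ∀ T₁ ∈ B, ∀ T₂ ∈ B, p ⊆ T₁ → p ⊆ T₂ → T₁ = T₂

def isMMPTS {n : ℕ} (B : Finset (Finset (Fin n))) : Prop :=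
  isPTS B ∧ ∀ B' : Finset (Finset (Fin n)), isPTS B' → B'.card ≤ B.card

def leave {n : ℕ} (B : Finset (Finset (Fin n))) : Set (Finset (Fin n)) :=
  {p | p.card = 2 ∧ ∀ T ∈ B, ¬ p ⊆ T}

def isTypeQ {n : ℕ} (B : Finset (Finset (Fin n))) : Prop :=
  ∃ a b c d : Fin n, a ≠ b ∧ a ≠ c ∧ a ≠ d ∧ b ≠ c ∧ b ≠ d ∧ c ≠ d ∧
    leave B = {{a, b}, {b, c}, {c, d}, {d, a}} ∧
    ∃ e : Fin n, ({a, c, e} : Finset (Fin n)) ∈ B ∧ ({b, d, e} : Finset (Fin n)) ∈ B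

def isPasch {n : ℕ} (B P : Finset (Finset (Fin n))) : Prop :=
  ∃ a b c d e f : Fin n, ({a, b, c, d, e, f} : Finset (Fin n)).card = 6 ∧
    P = {{a, b, c}, {a, d, e}, {b, d, f}, {c, e, f}} ∧ P ⊆ B

/-!
For odd `n` every point lies in an even number of pairs, and each triple through it covers two of
them, so all degrees of the leave are even. For `n ≡ 5 (mod 6)` the leave has
`n.choose 2 - 3 * #B ≡ 1 (mod 3)` pairs; a single pair would have vertices of degree one, so there
are at least four. Hence a system whose leave is a 4-cycle is maximum, and its type depends only on
whether the triples through the two pairs of opposite vertices of the 4-cycle meet. What remains is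
to exhibit two systems of order 17, whose properties are finite checks on the operation sending two
points to the third point of their triple.
-/

open Finset

section Counting

variable {n : ℕ} {B : Finset (Finset (Fin n))}

lemma card_filter_mem_powersetCard_two {α : Type*} [DecidableEq α] (s : Finset α) (x : α) :
    #{p ∈ powersetCard 2 s | x ∈ p} = if x ∈ s then #s - 1 else 0 := by
  split_ifs with hx
  · simpa using card_filter_powersetCard_subset {x} s 2 (by simpa) (by simp)
  · simp only [card_eq_zero, filter_eq_empty_iff, mem_powersetCard]
    exact fun p hp hxp ↦ hx (hp.1 hxp)

lemma three_le_card_of_degree_ne_one {α : Type*} [DecidableEq α] {L : Finset (Finset α)}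
    (hne : L.Nonempty) (hL : ∀ p ∈ L, #p = 2) (hdeg : ∀ x, #{p ∈ L | x ∈ p} ≠ 1) : 3 ≤ #L := by
  have another : ∀ p ∈ L, ∀ x ∈ p, ∃ q ∈ L, x ∈ q ∧ q ≠ p := by
    intro p hp x hx
    by_contra! h
    have hfilter : {q ∈ L | x ∈ q} = {p} := by
      ext q
      simp only [mem_filter, mem_singleton]
      grind
    exact hdeg x (card_eq_one.2 ⟨p, hfilter⟩)
  obtain ⟨p, hp⟩ := hne
  obtain ⟨x, y, -, rfl⟩ := card_eq_two.1 (hL p hp)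
  obtain ⟨q, hq, hxq, hqp⟩ := another _ hp x (by simp)
  obtain ⟨r, hr, hyr, hrp⟩ := another _ hp y (by simp)
  have hqr : q ≠ r := by
    rintro rfl
    have hsub : {x, y} ⊆ q := by grind
    exact hqp (eq_of_subset_of_card_le hsub (by rw [hL q hq, hL _ hp])).symm
  have hsub : ({{x, y}, q, r} : Finset (Finset α)) ⊆ L := by
    simp only [insert_subset_iff, singleton_subset_iff]
    exact ⟨hp, hq, hr⟩
  have hcard : #({{x, y}, q, r} : Finset (Finset α)) = 3 :=
    card_eq_three.2 ⟨_, _, _, hqp.symm, hrp.symm, hqr, rfl⟩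
  exact hcard ▸ card_le_card hsub

/-- The leave as a finset, so that it can be counted. -/
def leaveFinset (B : Finset (Finset (Fin n))) : Finset (Finset (Fin n)) :=
  {p ∈ powersetCard 2 univ | ∀ T ∈ B, ¬ p ⊆ T}

lemma coe_leaveFinset : (leaveFinset B : Set (Finset (Fin n))) = leave B := by
  ext p
  simp [leaveFinset, leave]

lemma isPTS.sum_leaveFinset_add_sum {M : Type*} [AddCommMonoid M] (hB : isPTS B)
    (f : Finset (Fin n) → M) :
    ∑ p ∈ leaveFinset B, f p + ∑ T ∈ B, ∑ p ∈ powersetCard 2 T, f p =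
      ∑ p ∈ powersetCard 2 univ, f p := by
  have hdisj : (B : Set (Finset (Fin n))).PairwiseDisjoint (powersetCard 2) := by
    intro S hS T hT hne
    refine disjoint_left.2 fun p hpS hpT ↦ hne ?_
    rw [mem_powersetCard] at hpS hpT
    exact hB.2 p hpS.2 S hS T hT hpS.1 hpT.1
  have hcovered : {p ∈ powersetCard 2 (univ : Finset (Fin n)) | ¬ ∀ T ∈ B, ¬ p ⊆ T} =
      B.biUnion (powersetCard 2) := by
    ext p
    simp only [mem_filter, mem_biUnion, mem_powersetCard, subset_univ, true_and]
    grind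
  rw [← sum_biUnion hdisj, ← hcovered, leaveFinset, sum_filter_add_sum_filter_not]

lemma isPTS.card_leaveFinset_add (hB : isPTS B) : #(leaveFinset B) + 3 * #B = n.choose 2 := by
  have htriple : ∀ T ∈ B, ∑ _p ∈ powersetCard 2 T, 1 = 3 := fun T hT ↦ by
    simp [card_powersetCard, hB.1 T hT]
  have h := hB.sum_leaveFinset_add_sum fun _ ↦ 1
  rw [sum_congr rfl htriple] at h
  simpa [mul_comm] using h

lemma isPTS.even_degree_leaveFinset (hB : isPTS B) (hn : Odd n) (x : Fin n) :
    Even #{p ∈ leaveFinset B | x ∈ p} := by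
  have h := hB.sum_leaveFinset_add_sum fun p ↦ if x ∈ p then 1 else 0
  simp only [← card_filter, card_filter_mem_powersetCard_two, mem_univ, if_true, card_univ,
    Fintype.card_fin] at h
  have htriples : Even (∑ T ∈ B, if x ∈ T then #T - 1 else 0) :=
    even_sum _ fun T hT ↦ by split_ifs <;> simp [hB.1 T hT]
  have htotal : Even (n - 1) := hn.tsub_odd odd_one
  exact (Nat.even_add.1 (h ▸ htotal)).2 htriples

lemma isPTS.four_le_card_leaveFinset (hB : isPTS B) (hn : n % 6 = 5) : 4 ≤ #(leaveFinset B) := by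
  have hodd : Odd n := Nat.odd_iff.2 (by omega)
  have hmod : #(leaveFinset B) % 3 = 1 := by
    have hchoose : n.choose 2 % 3 = 1 := by
      obtain ⟨k, rfl⟩ : ∃ k, n = 6 * k + 5 := ⟨n / 6, by omega⟩
      have : (6 * k + 5).choose 2 = 3 * (6 * k ^ 2 + 9 * k + 3) + 1 := by
        rw [Nat.choose_two_right, Nat.add_sub_assoc (by norm_num)]
        exact Nat.div_eq_of_eq_mul_left two_pos (by ring)
      omega
    have := hB.card_leaveFinset_add
    omega
  have hthree : 3 ≤ #(leaveFinset B) := by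
    refine three_le_card_of_degree_ne_one (card_pos.1 (by omega))
      (by simp +contextual [leaveFinset]) fun x hx ↦ ?_
    have := hB.even_degree_leaveFinset hodd x
    rw [hx] at this
    exact Nat.not_even_one this
  omega

lemma isPTS.isMMPTS_of_ncard_leave_le (hB : isPTS B) (hn : n % 6 = 5)
    (hleave : (leave B).ncard ≤ 4) : isMMPTS B := by
  refine ⟨hB, fun B' hB' ↦ ?_⟩
  rw [← coe_leaveFinset, Set.ncard_coe_finset] at hleave
  have := hB'.four_le_card_leaveFinset hn
  have := hB'.card_leaveFinset_add
  have := hB.card_leaveFinset_add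
  omega

end Counting

section FourCycle

variable {α : Type*} [DecidableEq α]

/-- The edge set of the 4-cycle `abcd`. -/
def fourCycle (a b c d : α) : Finset (Finset α) := {{a, b}, {b, c}, {c, d}, {d, a}}

/- A 4-cycle is the complete bipartite graph between its two pairs of opposite vertices. -/
lemma pair_mem_fourCycle_iff {a b c d x y : α} :
    {x, y} ∈ fourCycle a b c d ↔
      x ∈ ({a, c} : Finset α) ∧ y ∈ ({b, d} : Finset α) ∨
        x ∈ ({b, d} : Finset α) ∧ y ∈ ({a, c} : Finset α) := by
  simp only [fourCycle, mem_insert, mem_singleton, ← coe_inj, coe_pair, Set.pair_eq_pair_iff]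
  grind

lemma opposite_pairs_eq_of_fourCycle_eq {a b c d a' b' c' d' : α} (hac : a' ≠ c') (hbd : b' ≠ d')
    (hdisj : Disjoint ({a, c} : Finset α) {b, d})
    (h : fourCycle a' b' c' d' = fourCycle a b c d) :
    ({a', c'} : Finset α) = {a, c} ∧ ({b', d'} : Finset α) = {b, d} ∨
      ({a', c'} : Finset α) = {b, d} ∧ ({b', d'} : Finset α) = {a, c} := by
  have hab : {a', b'} ∈ fourCycle a b c d := h ▸ by simp [fourCycle]
  have hbc : {b', c'} ∈ fourCycle a b c d := h ▸ by simp [fourCycle]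
  have hcd : {c', d'} ∈ fourCycle a b c d := h ▸ by simp [fourCycle]
  rw [pair_mem_fourCycle_iff] at hab hbc hcd
  simp only [mem_insert, mem_singleton, disjoint_left, ← coe_inj, coe_pair,
    Set.pair_eq_pair_iff] at *
  grind

lemma coe_fourCycle (a b c d : α) :
    (fourCycle a b c d : Set (Finset α)) = {{a, b}, {b, c}, {c, d}, {d, a}} := by
  simp [fourCycle]

lemma isTypeQ_iff_of_leave_eq_fourCycle {n : ℕ} {B : Finset (Finset (Fin n))} {a b c d : Fin n}
    (hnodup : [a, b, c, d].Nodup) (hleave : leave B = fourCycle a b c d) :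
    isTypeQ B ↔ ∃ e, {a, c, e} ∈ B ∧ {b, d, e} ∈ B := by
  have hadd : ∀ x y e : Fin n, ({x, y, e} : Finset (Fin n)) = {x, y} ∪ {e} := fun x y e ↦ by grind
  simp only [List.nodup_cons, List.mem_cons, List.not_mem_nil, not_or] at hnodup
  constructor
  · rintro ⟨a', b', c', d', -, hac, -, -, hbd, -, hleave', e, hace, hbde⟩
    have hcycle : fourCycle a' b' c' d' = fourCycle a b c d := by
      rw [← coe_inj, ← hleave, hleave', coe_fourCycle]
    have hdisj : Disjoint ({a, c} : Finset (Fin n)) {b, d} := by grind [disjoint_left]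
    refine ⟨e, ?_⟩
    rw [hadd] at hace hbde ⊢
    rw [hadd b d]
    rcases opposite_pairs_eq_of_fourCycle_eq hac hbd hdisj hcycle with ⟨h₁, h₂⟩ | ⟨h₁, h₂⟩
    · exact ⟨h₁ ▸ hace, h₂ ▸ hbde⟩
    · exact ⟨h₂ ▸ hbde, h₁ ▸ hace⟩
  · rintro ⟨e, hace, hbde⟩
    refine ⟨a, b, c, d, ?_, ?_, ?_, ?_, ?_, ?_, hleave.trans (coe_fourCycle a b c d), e,
      hace, hbde⟩ <;> grind

lemma isPTS.isMMPTS_of_leave_eq_fourCycle {n : ℕ} {B : Finset (Finset (Fin n))} {a b c d : Fin n}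
    (hB : isPTS B) (hn : n % 6 = 5) (hleave : leave B = fourCycle a b c d) : isMMPTS B := by
  refine hB.isMMPTS_of_ncard_leave_le hn ?_
  rw [hleave, Set.ncard_coe_finset]
  exact card_le_four

end FourCycle

section SteinerOperation

variable {α : Type*}

/-- A partial triple system on `α` encoded as a partial binary operation: `z ∈ op x y` means that
`{x, y, z}` is a triple, and `op x y = none` that no triple contains both `x` and `y`. -/
structure IsPartialSteiner (op : α → α → Option α) : Prop where
  self_eq_none : ∀ x, op x x = none
  comm : ∀ x y, op x y = op y x
  rotate : ∀ x y, ∀ z ∈ op x y, x ∈ op y z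

/-- The absence of Pasch configurations `{a, b, c}, {a, d, e}, {b, d, f}, {c, e, f}`. In a partial
triple system the four triples force all other distinctness conditions once `c ≠ d`. -/
def IsAntiPasch (op : α → α → Option α) : Prop :=
  ∀ a b, ∀ c ∈ op a b, ∀ d, c ≠ d → ∀ e ∈ op a d, ∀ f ∈ op b d, f ∉ op c e

/- The library instance for `∀ z ∈ o, p z` is made local so that `op x y` is evaluated; otherwise
all values of `z` would be enumerated. -/
instance [Fintype α] [DecidableEq α] (op : α → α → Option α) : Decidable (IsAntiPasch op) :=
  let _ {p : α → Prop} [DecidablePred p] (o : Option α) : Decidable (∀ z ∈ o, p z) :=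
    Option.decidableForallMem o
  inferInstanceAs <| Decidable <|
    ∀ a b, ∀ c ∈ op a b, ∀ d, c ≠ d → ∀ e ∈ op a d, ∀ f ∈ op b d, f ∉ op c e

lemma IsPartialSteiner.ne {op : α → α → Option α} {x y z : α} (h : IsPartialSteiner op)
    (hz : z ∈ op x y) : x ≠ y := by
  rintro rfl
  simp [h.self_eq_none] at hz

variable [Fintype α] [DecidableEq α]

/-- The set of triples of the system encoded by `op`. -/
def tripleSet (op : α → α → Option α) : Finset (Finset α) :=
  {T | ∃ x y, ∃ z ∈ op x y, T = {x, y, z}}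

lemma mem_tripleSet {op : α → α → Option α} {T : Finset α} :
    T ∈ tripleSet op ↔ ∃ x y, ∃ z ∈ op x y, T = {x, y, z} := by
  simp [tripleSet]

namespace IsPartialSteiner

variable {op : α → α → Option α} {x y z : α} {T : Finset α}

lemma card_of_mem_tripleSet (h : IsPartialSteiner op) (hT : T ∈ tripleSet op) : #T = 3 := by
  obtain ⟨x, y, z, hz, rfl⟩ := mem_tripleSet.1 hT
  have hx := h.rotate x y z hz
  have hy := h.rotate y z x hx
  exact card_eq_three.2 ⟨x, y, z, h.ne hz, (h.ne hy).symm, h.ne hx, rfl⟩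

lemma exists_mem_of_mem_tripleSet (h : IsPartialSteiner op) (hT : T ∈ tripleSet op) (hx : x ∈ T)
    (hy : y ∈ T) (hxy : x ≠ y) : ∃ z ∈ op x y, T = {x, y, z} := by
  obtain ⟨a, b, c, hc, rfl⟩ := mem_tripleSet.1 hT
  have ha := h.rotate a b c hc
  have hb := h.rotate b c a ha
  simp only [mem_insert, mem_singleton] at hx hy
  have := h.comm
  grind

lemma triple_mem_tripleSet (h : IsPartialSteiner op) : {x, y, z} ∈ tripleSet op ↔ z ∈ op x y := by
  refine ⟨fun hT ↦ ?_, fun hz ↦ mem_tripleSet.2 ⟨x, y, z, hz, rfl⟩⟩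
  have hcard := h.card_of_mem_tripleSet hT
  have hxy : x ≠ y := by grind [card_le_two]
  obtain ⟨w, hw, heq⟩ := h.exists_mem_of_mem_tripleSet hT (by simp) (by simp) hxy
  have hzw : z ∈ ({x, y, w} : Finset α) := heq ▸ by simp
  grind [card_le_two]

variable {n : ℕ} {op : Fin n → Fin n → Option (Fin n)}

lemma isPTS_tripleSet (h : IsPartialSteiner op) : isPTS (tripleSet op) := by
  refine ⟨fun T ↦ h.card_of_mem_tripleSet, fun p hp S hS T hT hpS hpT ↦ ?_⟩
  obtain ⟨x, y, hxy, rfl⟩ := card_eq_two.1 hp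
  obtain ⟨z, hz, rfl⟩ := h.exists_mem_of_mem_tripleSet hS (hpS (by simp)) (hpS (by simp)) hxy
  obtain ⟨w, hw, rfl⟩ := h.exists_mem_of_mem_tripleSet hT (hpT (by simp)) (hpT (by simp)) hxy
  rw [Option.mem_unique hz hw]

lemma pair_mem_leave_tripleSet (h : IsPartialSteiner op) {x y : Fin n} (hxy : x ≠ y) :
    {x, y} ∈ leave (tripleSet op) ↔ op x y = none := by
  rw [Option.eq_none_iff_forall_not_mem]
  constructor
  · rintro ⟨-, hleave⟩ z hz
    exact hleave {x, y, z} (h.triple_mem_tripleSet.2 hz) (by grind)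
  · refine fun hnone ↦ ⟨card_pair hxy, fun T hT hsub ↦ ?_⟩
    obtain ⟨z, hz, -⟩ := h.exists_mem_of_mem_tripleSet hT (hsub (by simp)) (hsub (by simp)) hxy
    exact hnone z hz

lemma leave_tripleSet_eq (h : IsPartialSteiner op) {L : Finset (Finset (Fin n))}
    (hcard : ∀ p ∈ L, #p = 2) (hL : ∀ x y, x ≠ y → (op x y = none ↔ {x, y} ∈ L)) :
    leave (tripleSet op) = L := by
  have hpair : ∀ p : Finset (Fin n), #p = 2 → (p ∈ leave (tripleSet op) ↔ p ∈ L) := by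
    intro p hp
    obtain ⟨x, y, hxy, rfl⟩ := card_eq_two.1 hp
    rw [h.pair_mem_leave_tripleSet hxy, hL x y hxy]
  ext p
  exact ⟨fun hp ↦ (hpair p hp.1).1 hp, fun hp ↦ (hpair p (hcard p hp)).2 hp⟩

lemma not_isPasch_tripleSet (h : IsPartialSteiner op) (hop : IsAntiPasch op)
    (P : Finset (Finset (Fin n))) : ¬ isPasch (tripleSet op) P := by
  rintro ⟨a, b, c, d, e, f, hcard, rfl, hsub⟩
  simp only [insert_subset_iff, singleton_subset_iff, h.triple_mem_tripleSet] at hsub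
  obtain ⟨hc, he, hbf, hcf⟩ := hsub
  have hcd : c ≠ d := by
    rintro rfl
    have : #({a, b, c, e, f} : Finset (Fin n)) ≤ 5 := card_le_five
    grind
  exact hop a b c hc d hcd e he f hbf hcf

end IsPartialSteiner

end SteinerOperation

section Systems

/-- The operation sending `x` and `y` to the third point of the first triple listed in `l` that
contains them both. -/
def thirdPoint {α : Type*} [DecidableEq α] (l : List (α × α × α)) (x y : α) : Option α :=
  l.findSome? fun (a, b, c) ↦
    if x = a then if y = b then some c else if y = c then some b else none
    else if x = b then if y = c then some a else if y = a then some c else none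
    else if x = c then if y = a then some b else if y = b then some a else none
    else none

/-- An anti-Pasch system of Type-Q with leave `(0, 1, 2, 3)`; its triples through the opposite pairs
`{0, 2}` and `{1, 3}` meet in `4`. -/
def thirdQ : Fin 17 → Fin 17 → Option (Fin 17) := thirdPoint
  [(0, 2, 4), (0, 5, 6), (0, 7, 8), (0, 9, 12), (0, 10, 11), (0, 13, 16), (0, 14, 15), (1, 3, 4),
   (1, 5, 12), (1, 6, 14), (1, 7, 9), (1, 8, 16), (1, 10, 15), (1, 11, 13), (2, 5, 10), (2, 6, 9),
   (2, 7, 13), (2, 8, 14), (2, 11, 12), (2, 15, 16), (3, 5, 13), (3, 6, 11), (3, 7, 15), (3, 8, 10),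
   (3, 9, 16), (3, 12, 14), (4, 5, 16), (4, 6, 15), (4, 7, 12), (4, 8, 11), (4, 9, 10), (4, 13, 14),
   (5, 7, 11), (5, 8, 15), (5, 9, 14), (6, 7, 16), (6, 8, 12), (6, 10, 13), (7, 10, 14), (8, 9, 13),
   (9, 11, 15), (10, 12, 16), (11, 14, 16), (12, 13, 15)]

/-- An anti-Pasch system of Type-N with leave `(0, 1, 2, 3)`; its triples through the opposite pairs
are the disjoint `{0, 2, 4}` and `{1, 3, 5}`. -/
def thirdN : Fin 17 → Fin 17 → Option (Fin 17) := thirdPoint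
  [(0, 2, 4), (0, 5, 6), (0, 7, 9), (0, 8, 11), (0, 10, 14), (0, 12, 16), (0, 13, 15), (1, 3, 5),
   (1, 4, 6), (1, 7, 10), (1, 8, 12), (1, 9, 13), (1, 11, 15), (1, 14, 16), (2, 5, 16), (2, 6, 9),
   (2, 7, 13), (2, 8, 15), (2, 10, 11), (2, 12, 14), (3, 4, 15), (3, 6, 10), (3, 7, 14), (3, 8, 16),
   (3, 9, 12), (3, 11, 13), (4, 5, 8), (4, 7, 11), (4, 9, 14), (4, 10, 16), (4, 12, 13), (5, 7, 12),
   (5, 9, 15), (5, 10, 13), (5, 11, 14), (6, 7, 8), (6, 11, 12), (6, 13, 16), (6, 14, 15),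
   (7, 15, 16), (8, 9, 10), (8, 13, 14), (9, 11, 16), (10, 12, 15)]

lemma isPartialSteiner_thirdQ : IsPartialSteiner thirdQ where
  self_eq_none := by decide +kernel
  comm := by decide +kernel
  rotate := by decide +kernel

lemma isPartialSteiner_thirdN : IsPartialSteiner thirdN where
  self_eq_none := by decide +kernel
  comm := by decide +kernel
  rotate := by decide +kernel

lemma isAntiPasch_thirdQ : IsAntiPasch thirdQ := by decide +kernel

lemma isAntiPasch_thirdN : IsAntiPasch thirdN := by decide +kernel

lemma leave_tripleSet_thirdQ : leave (tripleSet thirdQ) = fourCycle (0 : Fin 17) 1 2 3 :=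
  isPartialSteiner_thirdQ.leave_tripleSet_eq (by simp [fourCycle]) (by decide +kernel)

lemma leave_tripleSet_thirdN : leave (tripleSet thirdN) = fourCycle (0 : Fin 17) 1 2 3 :=
  isPartialSteiner_thirdN.leave_tripleSet_eq (by simp [fourCycle]) (by decide +kernel)

lemma isTypeQ_tripleSet_thirdQ : isTypeQ (tripleSet thirdQ) := by
  rw [isTypeQ_iff_of_leave_eq_fourCycle (by decide) leave_tripleSet_thirdQ]
  simp only [isPartialSteiner_thirdQ.triple_mem_tripleSet]
  exact ⟨4, by decide +kernel⟩

lemma not_isTypeQ_tripleSet_thirdN : ¬ isTypeQ (tripleSet thirdN) := by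
  rw [isTypeQ_iff_of_leave_eq_fourCycle (by decide) leave_tripleSet_thirdN]
  simp only [isPartialSteiner_thirdN.triple_mem_tripleSet]
  decide +kernel

end Systems

theorem antiPasch_mmpts17_both_types :
    (∃ B : Finset (Finset (Fin 17)), isMMPTS B ∧ isTypeQ B ∧
      ∀ P : Finset (Finset (Fin 17)), ¬ isPasch B P) ∧
    (∃ B : Finset (Finset (Fin 17)), isMMPTS B ∧ ¬ isTypeQ B ∧
      ∀ P : Finset (Finset (Fin 17)), ¬ isPasch B P) := by
  have hQ := isPartialSteiner_thirdQ
  have hN := isPartialSteiner_thirdN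
  exact ⟨⟨tripleSet thirdQ,
      hQ.isPTS_tripleSet.isMMPTS_of_leave_eq_fourCycle rfl leave_tripleSet_thirdQ,
      isTypeQ_tripleSet_thirdQ, hQ.not_isPasch_tripleSet isAntiPasch_thirdQ⟩,
    ⟨tripleSet thirdN,
      hN.isPTS_tripleSet.isMMPTS_of_leave_eq_fourCycle rfl leave_tripleSet_thirdN,
      not_isTypeQ_tripleSet_thirdN, hN.not_isPasch_tripleSet isAntiPasch_thirdN⟩⟩
end

section
/- Every maximum partial triple system of order 17 contains at most 4 STS(7) subsystems (Fano planes), and there exists an MMPTS(17) of Type-Q containing exactly 4 STS(7) subsystems; every Type-N MMPTS(17) contains at most 3 STS(7) subsystems. -/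
def isFano {n : ℕ} (B : Finset (Finset (Fin n))) (S : Finset (Fin n)) : Prop :=
  S.card = 7 ∧ ∀ p : Finset (Fin n), p ⊆ S → p.card = 2 →
    ∃! T : Finset (Fin n), T ∈ B ∧ T ⊆ S ∧ p ⊆ T

/-! A system of order 17 with 44 triples has a 4-cycle as its leave. Any two of its Fano planes meet
in exactly three points, and counting the pairs that cross their union shows that every edge of the
leave crosses it too. Hence every plane avoids one pair of opposite corners `b`, `d` of the leave,
and of any two planes at least one passes through `a`, and at least one through `c`.

The planes through both `a` and `c` share the triple `{a, c, e}` on `a` and `c`, and are otherwise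
disjoint; the remaining four points of each lie among twelve points, so there are at most three such
planes. Besides two of these there cannot be both a plane missing `a` and a plane missing `c`: four
triples through a suitable point would need distinct third points among the three points outside the
four planes. So there are at most four planes. If there are four, three of them cover every point
except `b` and `d`, so the triple on `e` and `b` can only be `{b, d, e}`, and the system is of
Type-Q. -/

open Finset

variable {n : ℕ} {B : Finset (Finset (Fin n))} {S T U X Y : Finset (Fin n)} {p w x y z : Fin n}

namespace isPTS

theorem eq_of_mem (hB : isPTS B) (hT : T ∈ B) (hU : U ∈ B) (hxy : x ≠ y)
    (hxT : x ∈ T) (hyT : y ∈ T) (hxU : x ∈ U) (hyU : y ∈ U) : T = U :=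
  hB.2 {x, y} (card_pair hxy) T hT U hU (insert_subset hxT (singleton_subset_iff.2 hyT))
    (insert_subset hxU (singleton_subset_iff.2 hyU))

theorem of_card_inter_le_one (h₃ : ∀ T ∈ B, #T = 3)
    (h₁ : ∀ T ∈ B, ∀ U ∈ B, T ≠ U → #(T ∩ U) ≤ 1) : isPTS B := by
  refine ⟨h₃, fun p hp T hT U hU hpT hpU => by_contra fun hTU => ?_⟩
  have := card_le_card (subset_inter hpT hpU)
  have := h₁ T hT U hU hTU
  omega

theorem exists_eq_third (hB : isPTS B) (hT : T ∈ B) (hxy : x ≠ y) (hx : x ∈ T) (hy : y ∈ T) :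
    ∃ z, T = {x, y, z} := by
  have hcard : #((T.erase x).erase y) = 1 := by
    rw [card_erase_of_mem (mem_erase.2 ⟨hxy.symm, hy⟩), card_erase_of_mem hx, hB.1 T hT]
  obtain ⟨z, hz⟩ := card_eq_one.1 hcard
  exact ⟨z, by rw [← hz, insert_erase (mem_erase.2 ⟨hxy.symm, hy⟩), insert_erase hx]⟩

theorem third_ne (hB : isPTS B) (h : {x, y, z} ∈ B) : x ≠ y ∧ x ≠ z ∧ y ≠ z := by
  have hcard := hB.1 _ h
  refine ⟨?_, ?_, ?_⟩ <;> rintro rfl <;>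
    simp only [mem_insert, mem_singleton, true_or, or_true, insert_eq_of_mem] at hcard <;>
    exact absurd (card_le_two.trans_lt (by decide)) hcard.not_lt

theorem third_unique (hB : isPTS B) (hz : {x, y, z} ∈ B) (hw : {x, y, w} ∈ B) : z = w := by
  obtain ⟨hxy, hxz, hyz⟩ := hB.third_ne hz
  have h : ({x, y, z} : Finset (Fin n)) = {x, y, w} :=
    hB.eq_of_mem hz hw hxy (by simp) (by simp) (by simp) (by simp)
  have hmem : z ∈ ({x, y, w} : Finset (Fin n)) := h ▸ by simp
  simpa [hxz.symm, hyz.symm] using hmem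

end isPTS

theorem third_swap (h : {x, y, z} ∈ B) : {y, x, z} ∈ B := insert_comm x y {z} ▸ h

theorem third_rotate (h : {x, y, z} ∈ B) : {y, z, x} ∈ B := by
  rwa [pair_comm z x, insert_comm]

theorem isPTS.isFano_of_seven_le_card (hB : isPTS B) (hS : #S = 7)
    (h : 7 ≤ #{T ∈ B | T ⊆ S}) : isFano B S := by
  have hsub : {T ∈ B | T ⊆ S}.biUnion (powersetCard 2) ⊆ powersetCard 2 S :=
    biUnion_subset.2 fun T hT => powersetCard_mono (mem_filter.1 hT).2
  have hcard : #({T ∈ B | T ⊆ S}.biUnion (powersetCard 2)) = #{T ∈ B | T ⊆ S} * 3 := by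
    rw [card_biUnion]
    · refine sum_const_nat fun T hT => ?_
      rw [card_powersetCard, hB.1 T (mem_filter.1 hT).1]
      rfl
    · intro T hT U hU hTU
      refine disjoint_left.2 fun q hqT hqU => hTU ?_
      rw [mem_powersetCard] at hqT hqU
      exact hB.2 q hqT.2 T (mem_filter.1 hT).1 U (mem_filter.1 hU).1 hqT.1 hqU.1
  have heq := eq_of_subset_of_card_le hsub (by
    rw [card_powersetCard, hS, hcard]
    exact Nat.mul_le_mul_right 3 h)
  refine ⟨hS, fun q hqS hq => ?_⟩
  obtain ⟨T, hT, hqT⟩ := mem_biUnion.1 (heq ▸ mem_powersetCard.2 ⟨hqS, hq⟩)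
  rw [mem_filter] at hT
  rw [mem_powersetCard] at hqT
  exact ⟨T, ⟨hT.1, hT.2, hqT.1⟩,
    fun U hU => hB.2 q hq U hU.1 T hT.1 hU.2.2 hqT.1⟩

namespace isFano

theorem exists_triple (hS : isFano B S) (hx : x ∈ S) (hy : y ∈ S) (hxy : x ≠ y) :
    ∃ T ∈ B, T ⊆ S ∧ x ∈ T ∧ y ∈ T := by
  obtain ⟨T, ⟨hT, hTS, hxyT⟩, -⟩ := hS.2 {x, y}
    (insert_subset hx (singleton_subset_iff.2 hy)) (card_pair hxy)
  exact ⟨T, hT, hTS, hxyT (mem_insert_self x _), hxyT (mem_insert_of_mem (mem_singleton_self y))⟩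

theorem subset_of_mem (hS : isFano B S) (hB : isPTS B) (hT : T ∈ B) (hxy : x ≠ y) (hx : x ∈ S)
    (hy : y ∈ S) (hxT : x ∈ T) (hyT : y ∈ T) : T ⊆ S := by
  obtain ⟨U, hU, hUS, hxU, hyU⟩ := hS.exists_triple hx hy hxy
  rwa [hB.eq_of_mem hT hU hxy hxT hyT hxU hyU]

theorem eq_of_mem_of_not_subset (hS : isFano B S) (hB : isPTS B) (hT : T ∈ B) (hTS : ¬ T ⊆ S)
    (hx : x ∈ S) (hy : y ∈ S) (hxT : x ∈ T) (hyT : y ∈ T) : x = y :=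
  by_contra fun hxy => hTS (hS.subset_of_mem hB hT hxy hx hy hxT hyT)

theorem card_inter_le_one (hS : isFano B S) (hB : isPTS B) (hT : T ∈ B) (hTS : ¬ T ⊆ S) :
    #(S ∩ T) ≤ 1 := by
  refine card_le_one.2 fun x hx y hy => ?_
  rw [mem_inter] at hx hy
  exact hS.eq_of_mem_of_not_subset hB hT hTS hx.1 hy.1 hx.2 hy.2

theorem exists_third (hS : isFano B S) (hB : isPTS B) (hx : x ∈ S) (hy : y ∈ S) (hxy : x ≠ y) :
    ∃ z ∈ S, {x, y, z} ∈ B := by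
  obtain ⟨T, hT, hTS, hxT, hyT⟩ := hS.exists_triple hx hy hxy
  obtain ⟨z, rfl⟩ := hB.exists_eq_third hT hxy hxT hyT
  exact ⟨z, hTS (by simp), hT⟩

theorem third_mem (hS : isFano B S) (hB : isPTS B) (h : {x, y, z} ∈ B) (hx : x ∈ S)
    (hy : y ∈ S) : z ∈ S :=
  hS.subset_of_mem hB h (hB.third_ne h).1 hx hy (by simp) (by simp) (by simp)

end isFano

/-! ### The leave as a graph -/

/-- The leave of a partial triple system as a simple graph on the points. -/
def leaveGraph (B : Finset (Finset (Fin n))) : SimpleGraph (Fin n) where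
  Adj x y := x ≠ y ∧ ∀ T ∈ B, x ∈ T → y ∉ T
  symm := ⟨fun _ _ h => ⟨h.1.symm, fun T hT hy hx => h.2 T hT hx hy⟩⟩

instance (B : Finset (Finset (Fin n))) : DecidableRel (leaveGraph B).Adj :=
  fun x y => inferInstanceAs (Decidable (x ≠ y ∧ ∀ T ∈ B, x ∈ T → y ∉ T))

theorem mem_leave_pair : {x, y} ∈ leave B ↔ (leaveGraph B).Adj x y := by
  refine ⟨fun h => ?_, fun h => ?_⟩
  · exact ⟨fun hxy => by simpa [hxy] using h.1,
      fun T hT hx hy => h.2 T hT (insert_subset hx (singleton_subset_iff.2 hy))⟩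
  · refine ⟨card_pair h.1, fun T hT hsub => h.2 T hT (hsub ?_) (hsub ?_)⟩ <;> simp

theorem leave_eq_image_edgeSet : leave B = Sym2.toFinset '' (leaveGraph B).edgeSet := by
  ext q
  refine ⟨fun hq => ?_, ?_⟩
  · obtain ⟨x, y, -, rfl⟩ := card_eq_two.1 hq.1
    exact ⟨s(x, y), mem_leave_pair.1 hq, Sym2.toFinset_mk_eq⟩
  · rintro ⟨⟨x, y⟩, h, rfl⟩
    have : Sym2.toFinset s(x, y) = {x, y} := Sym2.toFinset_mk_eq
    exact this ▸ mem_leave_pair.2 h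

theorem exists_third_of_not_adj (hB : isPTS B) (hxy : x ≠ y) (h : ¬ (leaveGraph B).Adj x y) :
    ∃ z, {x, y, z} ∈ B := by
  have : ∃ T ∈ B, x ∈ T ∧ y ∈ T := by
    by_contra! hcon
    exact h ⟨hxy, hcon⟩
  obtain ⟨T, hT, hx, hy⟩ := this
  obtain ⟨z, rfl⟩ := hB.exists_eq_third hT hxy hx hy
  exact ⟨z, hT⟩

/-- The triples of `B` through the point `p`. -/
def triplesThrough (B : Finset (Finset (Fin n))) (p : Fin n) : Finset (Finset (Fin n)) :=
  {T ∈ B | p ∈ T}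

theorem mem_triplesThrough : T ∈ triplesThrough B p ↔ T ∈ B ∧ p ∈ T := mem_filter

theorem card_neighborFinset_inter_add_sum_card_inter (hB : isPTS B) (hp : p ∉ S) :
    #((leaveGraph B).neighborFinset p ∩ S) + ∑ T ∈ triplesThrough B p, #(S ∩ T) = #S := by
  have hone : ∀ q ∈ S \ (leaveGraph B).neighborFinset p, #{T ∈ triplesThrough B p | q ∈ T} = 1 := by
    intro q hq
    rw [mem_sdiff, SimpleGraph.mem_neighborFinset] at hq
    have hpq : p ≠ q := fun h => hp (h ▸ hq.1)
    obtain ⟨z, hz⟩ := exists_third_of_not_adj hB hpq hq.2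
    refine card_eq_one.2 ⟨{p, q, z}, eq_singleton_iff_unique_mem.2 ⟨?_, fun T hT => ?_⟩⟩
    · simp [mem_triplesThrough, hz]
    · rw [mem_filter, mem_triplesThrough] at hT
      exact hB.eq_of_mem hT.1.1 hz hpq hT.1.2 hT.2 (by simp) (by simp)
  have hsum : ∑ T ∈ triplesThrough B p, #(S ∩ T) = #(S \ (leaveGraph B).neighborFinset p) := by
    rw [← mul_one #(S \ _), ← sum_card_inter hone]
    refine sum_congr rfl fun T hT => congrArg card ?_
    rw [mem_triplesThrough] at hT
    ext q
    simp only [mem_inter, mem_sdiff, SimpleGraph.mem_neighborFinset]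
    exact ⟨fun h => ⟨⟨h.1, fun hadj => hadj.2 T hT.1 hT.2 h.2⟩, h.2⟩, fun h => ⟨h.1.1, h.2⟩⟩
  rw [hsum, inter_comm, card_inter_add_card_sdiff]

theorem degree_add_two_mul_card_triplesThrough (hB : isPTS B) (p : Fin n) :
    (leaveGraph B).degree p + 2 * #(triplesThrough B p) + 1 = n := by
  have hsum : ∑ T ∈ triplesThrough B p, #(univ.erase p ∩ T) = 2 * #(triplesThrough B p) := by
    rw [sum_const_nat (m := 2), mul_comm]
    intro T hT
    rw [mem_triplesThrough] at hT
    rw [erase_inter, univ_inter, card_erase_of_mem hT.2, hB.1 T hT.1]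
  have hN : (leaveGraph B).neighborFinset p ⊆ univ.erase p := fun q hq => by
    simpa using (SimpleGraph.mem_neighborFinset _ _ _).1 hq |>.ne'
  have h := card_neighborFinset_inter_add_sum_card_inter hB (notMem_erase p univ)
  have hn : #(univ.erase p) + 1 = n := by
    rw [card_erase_add_one (mem_univ p), card_univ, Fintype.card_fin]
  rw [hsum, inter_eq_left.2 hN, SimpleGraph.card_neighborFinset_eq_degree] at h
  omega

theorem even_degree_leaveGraph (hB : isPTS B) (hn : Odd n) (p : Fin n) :
    Even ((leaveGraph B).degree p) := by
  have h := degree_add_two_mul_card_triplesThrough hB p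
  obtain ⟨m, rfl⟩ := hn
  exact ⟨m - #(triplesThrough B p), by omega⟩

theorem two_mul_card_edgeFinset_add (hB : isPTS B) :
    2 * #(leaveGraph B).edgeFinset + 6 * #B + n = n * n := by
  have hthrough : ∑ p, #(triplesThrough B p) = 3 * #B := by
    rw [mul_comm, ← sum_const_nat (m := 3) hB.1]
    simpa [bipartiteAbove, bipartiteBelow, triplesThrough] using
      sum_card_bipartiteAbove_eq_sum_card_bipartiteBelow (s := univ) (t := B)
        (fun (p : Fin n) T => p ∈ T)
  have hsum : ∑ p, ((leaveGraph B).degree p + 2 * #(triplesThrough B p) + 1) = n * n := by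
    simp [degree_add_two_mul_card_triplesThrough hB]
  rw [sum_add_distrib, sum_add_distrib, ← mul_sum, hthrough,
    SimpleGraph.sum_degrees_eq_twice_card_edges] at hsum
  simp only [sum_const, card_univ, Fintype.card_fin, smul_eq_mul, mul_one] at hsum
  omega

theorem isFano.card_neighborFinset_inter_add_card_triplesThrough (hU : isFano B U) (hB : isPTS B)
    (hp : p ∉ U) : #((leaveGraph B).neighborFinset p ∩ U) + #(triplesThrough B p) =
      7 + #{T ∈ triplesThrough B p | Disjoint T U} := by
  have hsum : ∑ T ∈ triplesThrough B p, #(U ∩ T) = #{T ∈ triplesThrough B p | ¬ Disjoint T U} := by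
    rw [card_filter]
    refine sum_congr rfl fun T hT => ?_
    rw [mem_triplesThrough] at hT
    have hle := hU.card_inter_le_one hB hT.1 fun h => hp (h hT.2)
    have hdisj : Disjoint T U ↔ #(U ∩ T) = 0 := by
      rw [disjoint_comm, disjoint_iff_inter_eq_empty, card_eq_zero]
    split_ifs with h <;> rw [hdisj] at h <;> omega
  have h := card_neighborFinset_inter_add_sum_card_inter hB hp
  have := card_filter_add_card_filter_not (s := triplesThrough B p) (fun T => Disjoint T U)
  rw [hsum, hU.1] at h
  omega

/-! ### The leave in order 17 -/

section FourCycle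

variable {V : Type*} {G : SimpleGraph V} {a b c d v : V}

/-- The edges of `G` are exactly those of the 4-cycle `a b c d`; other vertices are isolated. -/
structure IsFourCycle (G : SimpleGraph V) (a b c d : V) : Prop where
  ne_ac : a ≠ c
  ne_bd : b ≠ d
  edgeSet_eq : G.edgeSet = {s(a, b), s(b, c), s(c, d), s(d, a)}

namespace IsFourCycle

theorem rotate (h : IsFourCycle G a b c d) : IsFourCycle G b c d a where
  ne_ac := h.ne_bd
  ne_bd := h.ne_ac.symm
  edgeSet_eq := by
    rw [h.edgeSet_eq]
    ext e
    simp only [Set.mem_insert_iff, Set.mem_singleton_iff]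
    tauto

theorem adj_iff (h : IsFourCycle G a b c d) {x y : V} :
    G.Adj x y ↔ s(x, y) = s(a, b) ∨ s(x, y) = s(b, c) ∨ s(x, y) = s(c, d) ∨ s(x, y) = s(d, a) := by
  rw [← G.mem_edgeSet, h.edgeSet_eq]
  rfl

theorem adj (h : IsFourCycle G a b c d) : G.Adj a b := h.adj_iff.2 (Or.inl rfl)

theorem adj_left_iff (h : IsFourCycle G a b c d) : G.Adj a v ↔ v = b ∨ v = d := by
  have hab := h.adj.ne
  have hac := h.ne_ac
  have hda := h.rotate.rotate.rotate.adj.ne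
  rw [h.adj_iff]
  simp only [Sym2.eq_iff]
  grind

theorem mem_of_adj (h : IsFourCycle G a b c d) {x y : V} (hxy : G.Adj x y) :
    x = a ∨ x = b ∨ x = c ∨ x = d := by
  simp only [h.adj_iff, Sym2.eq_iff] at hxy
  tauto

end IsFourCycle

variable [Fintype V] [DecidableRel G.Adj]

theorem exists_card_eq_four_degree_eq_two (hcard : #G.edgeFinset = 4)
    (heven : ∀ v, Even (G.degree v)) :
    ∃ N : Finset V, #N = 4 ∧ (∀ v ∈ N, G.degree v = 2) ∧ ∀ v, G.neighborFinset v ⊆ N := by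
  classical
  let N : Finset V := {v | G.degree v ≠ 0}
  have hN : ∀ v, v ∈ N ↔ G.degree v ≠ 0 := fun v => by simp [N]
  have hnbr : ∀ v, G.neighborFinset v ⊆ N := fun v w hw => by
    rw [G.mem_neighborFinset] at hw
    exact (hN w).2 ((G.degree_pos_iff_exists_adj w).2 ⟨v, hw.symm⟩).ne'
  have hsum : ∑ v ∈ N, G.degree v = 8 := by
    rw [sum_filter_ne_zero, G.sum_degrees_eq_twice_card_edges, hcard]
  have htwo : ∀ v ∈ N, 2 ≤ G.degree v := fun v hv => by
    obtain ⟨m, hm⟩ := heven v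
    have := (hN v).1 hv
    omega
  have hle : #N ≤ 4 := by
    have := card_nsmul_le_sum N (fun v => G.degree v) 2 htwo
    rw [smul_eq_mul, hsum] at this
    omega
  have hdeg : ∀ v ∈ N, G.degree v = 2 := fun v hv => by
    have : #(G.neighborFinset v) ≤ #(N.erase v) := card_le_card fun w hw =>
      mem_erase.2 ⟨fun h => G.irrefl (h ▸ (G.mem_neighborFinset v w).1 hw), hnbr v hw⟩
    rw [G.card_neighborFinset_eq_degree, card_erase_of_mem hv] at this
    have := htwo v hv
    obtain ⟨m, hm⟩ := heven v
    omega
  rw [sum_const_nat hdeg] at hsum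
  exact ⟨N, by omega, hdeg, hnbr⟩

theorem IsFourCycle.of_adj (hcard : #G.edgeFinset = 4) (hac : a ≠ c) (hbd : b ≠ d)
    (hab : G.Adj a b) (hbc : G.Adj b c) (hcd : G.Adj c d) (hda : G.Adj d a) :
    IsFourCycle G a b c d where
  ne_ac := hac
  ne_bd := hbd
  edgeSet_eq := by
    classical
    have hsub : {s(a, b), s(b, c), s(c, d), s(d, a)} ⊆ G.edgeFinset := by
      simp [insert_subset_iff, hab, hbc, hcd, hda]
    have hfour : #{s(a, b), s(b, c), s(c, d), s(d, a)} = 4 := by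
      have := hab.ne
      have := hbc.ne
      have := hcd.ne
      have := hda.ne
      rw [card_insert_of_notMem, card_insert_of_notMem, card_pair]
      all_goals
        simp only [mem_insert, mem_singleton, Sym2.eq_iff, ne_eq]
        grind
    rw [← G.coe_edgeFinset, ← eq_of_subset_of_card_le hsub (by rw [hcard, hfour])]
    simp

theorem exists_isFourCycle (hcard : #G.edgeFinset = 4) (heven : ∀ v, Even (G.degree v)) :
    ∃ a b c d, IsFourCycle G a b c d := by
  classical
  obtain ⟨N, hN, hdeg, hnbr⟩ := exists_card_eq_four_degree_eq_two hcard heven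
  obtain ⟨a, ha⟩ : N.Nonempty := card_pos.1 (by omega)
  obtain ⟨b, d, hbd, hNa⟩ := card_eq_two.1 ((G.card_neighborFinset_eq_degree a).trans (hdeg a ha))
  obtain ⟨c, hcN, hc⟩ : ∃ c ∈ N, c ∉ ({a, b, d} : Finset V) :=
    exists_mem_notMem_of_card_lt_card (card_le_three.trans_lt (by omega))
  simp only [mem_insert, mem_singleton, not_or] at hc
  have hadj : ∀ v, G.Adj a v ↔ v ∈ ({b, d} : Finset V) := fun v => by
    rw [← G.mem_neighborFinset, hNa]
  have hab : G.Adj a b := by simp [hadj]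
  have had : G.Adj a d := by simp [hadj]
  have hrest : #((N.erase a).erase c) = 2 := by
    rw [card_erase_of_mem (mem_erase.2 ⟨hc.1, hcN⟩), card_erase_of_mem ha, hN]
  have hbdrest : {b, d} = (N.erase a).erase c := by
    refine eq_of_subset_of_card_le (fun v hv => ?_) (by rw [hrest, card_pair hbd])
    have hav := (hadj v).2 hv
    refine mem_erase.2 ⟨?_, mem_erase.2 ⟨hav.ne', hnbr a ((G.mem_neighborFinset a v).2 hav)⟩⟩
    rintro rfl
    simp [hc] at hv
  have hNc : G.neighborFinset c = (N.erase a).erase c := by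
    refine eq_of_subset_of_card_le (fun v hv => ?_)
      (by rw [hrest, G.card_neighborFinset_eq_degree, hdeg c hcN])
    have hcv := (G.mem_neighborFinset c v).1 hv
    refine mem_erase.2 ⟨hcv.ne', mem_erase.2 ⟨?_, hnbr c hv⟩⟩
    rintro rfl
    simpa [hc] using (hadj c).1 hcv.symm
  have hcadj : ∀ v ∈ ({b, d} : Finset V), G.Adj c v := fun v hv => by
    rwa [← G.mem_neighborFinset, hNc, ← hbdrest]
  exact ⟨a, b, c, d, .of_adj hcard (Ne.symm hc.1) hbd hab (hcadj b (by simp)).symm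
    (hcadj d (by simp)) had.symm⟩

end FourCycle

theorem IsFourCycle.isTypeQ {a b c d e : Fin n} (h : IsFourCycle (leaveGraph B) a b c d)
    (hace : {a, c, e} ∈ B) (hbde : {b, d, e} ∈ B) : isTypeQ B := by
  refine ⟨a, b, c, d, h.adj.ne, h.ne_ac, h.rotate.rotate.rotate.adj.ne.symm, h.rotate.adj.ne,
    h.ne_bd, h.rotate.rotate.adj.ne, ?_, e, hace, hbde⟩
  rw [leave_eq_image_edgeSet, h.edgeSet_eq]
  simp only [Set.image_insert_eq, Set.image_singleton, Sym2.toFinset_mk_eq]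

namespace isPTS

variable {B : Finset (Finset (Fin 17))}

theorem card_le_forty_four (hB : isPTS B) : #B ≤ 44 := by
  have hcount := two_mul_card_edgeFinset_add hB
  by_contra! hlt
  obtain ⟨⟨x, y⟩, hxy⟩ : (leaveGraph B).edgeFinset.Nonempty := card_pos.1 (by omega)
  have hpos : 0 < (leaveGraph B).degree x :=
    ((leaveGraph B).degree_pos_iff_exists_adj x).2 ⟨y, SimpleGraph.mem_edgeFinset.1 hxy⟩
  have hle := (leaveGraph B).degree_le_card_edgeFinset x
  obtain ⟨m, hm⟩ := even_degree_leaveGraph hB (by decide) x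
  omega

theorem card_edgeFinset_leaveGraph (hB : isPTS B) (h44 : #B = 44) :
    #(leaveGraph B).edgeFinset = 4 := by
  have := two_mul_card_edgeFinset_add hB
  omega

theorem exists_isFourCycle_leaveGraph (hB : isPTS B) (h44 : #B = 44) :
    ∃ a b c d, IsFourCycle (leaveGraph B) a b c d :=
  exists_isFourCycle (hB.card_edgeFinset_leaveGraph h44) (even_degree_leaveGraph hB (by decide))

end isPTS

/-! ### Intersections of Fano planes -/

theorem isPTS.card_le_card_of_forall_exists_third (hB : isPTS B)
    (h : ∀ q ∈ X, ∃ z ∈ Y, {p, q, z} ∈ B) : #X ≤ #Y :=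
  card_le_card_of_forall_subsingleton (fun q z => {p, q, z} ∈ B) h fun z _ q hq r hr => by
    refine hB.third_unique (x := z) (y := p) ?_ ?_
    · exact third_rotate (third_rotate hq.2)
    · exact third_rotate (third_rotate hr.2)

namespace isFano

theorem exists_third_mem_inter (hS : isFano B S) (hT : isFano B T) (hB : isPTS B)
    (hx : x ∈ S ∩ T) (hy : y ∈ S ∩ T) (hxy : x ≠ y) : ∃ z ∈ S ∩ T, {x, y, z} ∈ B := by
  rw [mem_inter] at hx hy
  obtain ⟨z, hz, hxyz⟩ := hS.exists_third hB hx.1 hy.1 hxy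
  exact ⟨z, mem_inter.2 ⟨hz, hT.third_mem hB hxyz hx.2 hy.2⟩, hxyz⟩

theorem three_le_card_inter (hS : isFano B S) (hT : isFano B T) (hB : isPTS B)
    (h : 2 ≤ #(S ∩ T)) : 3 ≤ #(S ∩ T) := by
  obtain ⟨x, hx, y, hy, hxy⟩ := one_lt_card.1 h
  obtain ⟨z, hz, hxyz⟩ := hS.exists_third_mem_inter hT hB hx hy hxy
  rw [← hB.1 _ hxyz]
  exact card_le_card (by simp [insert_subset_iff, hx, hy, hz])

theorem inter_mem (hS : isFano B S) (hT : isFano B T) (hB : isPTS B) (h : #(S ∩ T) = 3) :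
    S ∩ T ∈ B := by
  obtain ⟨x, hx, y, hy, hxy⟩ := one_lt_card.1 (show 1 < #(S ∩ T) by omega)
  obtain ⟨z, hz, hxyz⟩ := hS.exists_third_mem_inter hT hB hx hy hxy
  have heq : {x, y, z} = S ∩ T := eq_of_subset_of_card_le
    (by simp [insert_subset_iff, hx, hy, hz]) (by rw [h, hB.1 _ hxyz])
  exact heq ▸ hxyz

theorem card_sdiff_add_card_inter (hS : isFano B S) : #(S \ T) + #(S ∩ T) = 7 := by
  rw [Finset.card_sdiff_add_card_inter, hS.1]

theorem card_inter_add_card_le (hS : isFano B S) (hT : isFano B T) (hB : isPTS B)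
    (hX : X ⊆ S \ T) (hp : p ∈ X)
    (hclosed : ∀ U ∈ B, ∀ q ∈ X, q ≠ p → p ∈ U → q ∈ U → U ⊆ X) :
    #(S ∩ T) + #X ≤ #(S \ T) := by
  have hpST := mem_sdiff.1 (hX hp)
  -- The lines joining `p` to `S ∩ T` have distinct third points, which lie in `S \ T` and off `X`.
  suffices h : #(S ∩ T) ≤ #((S \ T) \ X) by
    rw [card_sdiff_of_subset hX] at h
    have := card_le_card hX
    omega
  refine hB.card_le_card_of_forall_exists_third (p := p) fun q hq => ?_
  rw [mem_inter] at hq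
  obtain ⟨z, hzS, hz⟩ := hS.exists_third hB hpST.1 hq.1 (by rintro rfl; exact hpST.2 hq.2)
  have hzT : z ∉ T := fun hzT => hpST.2 (hT.third_mem hB (third_rotate hz) hq.2 hzT)
  have hzX : z ∉ X := fun hzX => by
    have hsub := hclosed _ hz z hzX (hB.third_ne hz).2.1.symm (by simp) (by simp)
    exact (mem_sdiff.1 (hX (hsub (show q ∈ _ by simp)))).2 hq.2
  exact ⟨z, mem_sdiff.2 ⟨mem_sdiff.2 ⟨hzS, hzT⟩, hzX⟩, hz⟩

theorem card_inter_le_three (hS : isFano B S) (hT : isFano B T) (hB : isPTS B) (hST : S ≠ T) :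
    #(S ∩ T) ≤ 3 := by
  obtain ⟨p, hp⟩ : (S \ T).Nonempty := sdiff_nonempty.2 fun h =>
    hST (eq_of_subset_of_card_le h (by rw [hS.1, hT.1]))
  have h := hS.card_inter_add_card_le hT hB (singleton_subset_iff.2 hp) (mem_singleton_self p)
    fun _ _ q hq hqp => absurd (mem_singleton.1 hq) hqp
  have := hS.card_sdiff_add_card_inter (T := T)
  rw [card_singleton] at h
  omega

theorem not_disjoint_of_subset (hS : isFano B S) (hT : isFano B T) (hB : isPTS B)
    (hST : #(S ∩ T) = 3) (hU : U ∈ B) (hUS : U ⊆ S) : ¬ Disjoint U T := by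
  intro hdisj
  have hU3 := hB.1 U hU
  obtain ⟨p, hp⟩ : U.Nonempty := card_pos.1 (by omega)
  have h := hS.card_inter_add_card_le hT hB (subset_sdiff.2 ⟨hUS, hdisj⟩) hp
    fun V hV q hq hqp hpV hqV => (hB.eq_of_mem hV hU hqp.symm hpV hqV hp hq).subset
  have := hS.card_sdiff_add_card_inter (T := T)
  omega

theorem card_inter_inter_eq_one (hS : isFano B S) (hT : isFano B T) (hU : isFano B U)
    (hB : isPTS B) (hST : #(S ∩ T) = 3) (hSU : #(S ∩ U) = 3) (h : ¬ S ∩ T ⊆ U) :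
    #(S ∩ T ∩ U) = 1 := by
  have hmem := hS.inter_mem hT hB hST
  have hle := hU.card_inter_le_one hB hmem h
  have hpos : 0 < #(S ∩ T ∩ U) := card_pos.2 <|
    not_disjoint_iff_nonempty_inter.1 (hS.not_disjoint_of_subset hU hB hSU hmem inter_subset_left)
  rw [inter_comm] at hle
  omega

theorem card_sdiff_le_card_compl (hS : isFano B S) (hT : isFano B T) (hB : isPTS B)
    (hx : x ∈ S \ T) (hiso : ∀ y, ¬ (leaveGraph B).Adj x y) : #(T \ S) ≤ #(S ∪ T)ᶜ := by
  rw [mem_sdiff] at hx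
  refine hB.card_le_card_of_forall_exists_third (p := x) fun y hy => ?_
  rw [mem_sdiff] at hy
  obtain ⟨z, hz⟩ := exists_third_of_not_adj hB (by rintro rfl; exact hx.2 hy.1) (hiso y)
  refine ⟨z, ?_, hz⟩
  rw [mem_compl, mem_union, not_or]
  exact ⟨fun hzS => hy.2 (hS.third_mem hB (third_rotate (third_rotate hz)) hzS hx.1),
    fun hzT => hx.2 (hT.third_mem hB (third_rotate hz) hy.1 hzT)⟩

end isFano

theorem mem_iff_notMem_of_card_edgeFinset_le_card_interedges {V : Type*} [Fintype V] [DecidableEq V]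
    {G : SimpleGraph V} [DecidableRel G.Adj] {U : Finset V} {x y : V}
    (h : #G.edgeFinset ≤ #(G.interedges U Uᶜ)) (hxy : G.Adj x y) : x ∈ U ↔ y ∉ U := by
  have hinj : Set.InjOn (fun e : V × V => s(e.1, e.2)) (G.interedges U Uᶜ) := by
    rintro ⟨u, v⟩ huv ⟨u', v'⟩ huv' heq
    simp only [mem_coe, SimpleGraph.mem_interedges_iff, mem_compl] at huv huv'
    rcases Sym2.eq_iff.1 heq with ⟨rfl, rfl⟩ | ⟨rfl, rfl⟩
    · rfl
    · exact absurd huv'.1 huv.2.1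
  have himage : (G.interedges U Uᶜ).image (fun e => s(e.1, e.2)) = G.edgeFinset := by
    refine eq_of_subset_of_card_le (fun e he => ?_) (by rwa [card_image_of_injOn hinj])
    obtain ⟨⟨u, v⟩, huv, rfl⟩ := mem_image.1 he
    exact SimpleGraph.mem_edgeFinset.2 (G.mem_interedges_iff.1 huv).2.2
  obtain ⟨⟨u, v⟩, huv, heq⟩ := mem_image.1
    (himage ▸ SimpleGraph.mem_edgeFinset.2 (G.mem_edgeSet.2 hxy))
  rw [SimpleGraph.mem_interedges_iff, mem_compl] at huv
  rcases Sym2.eq_iff.1 heq with ⟨rfl, rfl⟩ | ⟨rfl, rfl⟩ <;> tauto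

/-- The pairs `(u, r)` crossing the cut `W` that lie in a triple with third point in `X`. -/
def crossPairs (B : Finset (Finset (Fin n))) (W X : Finset (Fin n)) : Finset (Fin n × Fin n) :=
  {e ∈ W ×ˢ Wᶜ | ∃ w ∈ X, {e.1, e.2, w} ∈ B}

theorem mem_crossPairs {W : Finset (Fin n)} :
    (x, y) ∈ crossPairs B W X ↔ (x ∈ W ∧ y ∉ W) ∧ ∃ w ∈ X, {x, y, w} ∈ B := by
  simp only [crossPairs, mem_filter, mem_product, mem_compl]

theorem isPTS.card_mul_card_compl_le (hB : isPTS B) (W : Finset (Fin n)) :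
    #W * #Wᶜ ≤ #((leaveGraph B).interedges W Wᶜ) + #(crossPairs B W W) + #(crossPairs B W Wᶜ) := by
  have hcover : W ×ˢ Wᶜ ⊆
      (leaveGraph B).interedges W Wᶜ ∪ crossPairs B W W ∪ crossPairs B W Wᶜ := by
    rintro ⟨x, y⟩ hxy
    rw [mem_product, mem_compl] at hxy
    simp only [mem_union, SimpleGraph.mem_interedges_iff, mem_compl, mem_crossPairs, hxy,
      not_false_eq_true, and_self, true_and]
    by_cases hadj : (leaveGraph B).Adj x y
    · exact Or.inl (Or.inl hadj)
    · obtain ⟨w, hw⟩ := exists_third_of_not_adj hB (ne_of_mem_of_not_mem hxy.1 hxy.2) hadj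
      by_cases hwW : w ∈ W
      · exact Or.inl (Or.inr ⟨w, hwW, hw⟩)
      · exact Or.inr ⟨w, hwW, hw⟩
  rw [← card_product]
  exact (card_le_card hcover).trans <|
    (card_union_le _ _).trans <| Nat.add_le_add_right (card_union_le _ _) _

theorem isPTS.card_crossPairs_compl_le (hB : isPTS B) (W : Finset (Fin n)) :
    #(crossPairs B W Wᶜ) ≤ #Wᶜ.offDiag := by
  refine card_le_card_of_forall_subsingleton
    (fun e f => f.1 = e.2 ∧ {e.1, e.2, f.2} ∈ B) ?_ ?_
  · rintro ⟨u, r⟩ hur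
    obtain ⟨⟨-, hr⟩, w, hw, hurw⟩ := mem_crossPairs.1 hur
    exact ⟨(r, w), mem_offDiag.2 ⟨mem_compl.2 hr, hw, (hB.third_ne hurw).2.2⟩, rfl, hurw⟩
  · rintro ⟨r, w⟩ - ⟨u₁, r₁⟩ ⟨-, rfl, h₁⟩ ⟨u₂, r₂⟩ ⟨-, rfl, h₂⟩
    exact congrArg (·, r) (hB.third_unique (third_rotate h₁) (third_rotate h₂))

theorem isFano.card_crossPairs_union_le (hS : isFano B S) (hT : isFano B T) (hB : isPTS B) :
    #(crossPairs B (S ∪ T) (S ∪ T)) ≤ 2 * (#(S \ T) * #(T \ S)) := by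
  calc #(crossPairs B (S ∪ T) (S ∪ T)) ≤ #((S \ T) ×ˢ (T \ S) ∪ (T \ S) ×ˢ (S \ T)) := by
        refine card_le_card_of_forall_subsingleton
          (fun e f => f.1 = e.1 ∧ {e.1, e.2, f.2} ∈ B) ?_ ?_
        · rintro ⟨u, r⟩ hur
          obtain ⟨⟨hu, hr⟩, w, hw, hurw⟩ := mem_crossPairs.1 hur
          refine ⟨(u, w), ?_, rfl, hurw⟩
          have hruw := third_rotate (third_rotate hurw)
          have hS' : w ∈ S → u ∉ S := fun hwS huS =>
            hr (mem_union_left T (hS.third_mem hB hruw hwS huS))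
          have hT' : w ∈ T → u ∉ T := fun hwT huT =>
            hr (mem_union_right S (hT.third_mem hB hruw hwT huT))
          simp only [mem_union, mem_product, mem_sdiff] at hu hw ⊢
          tauto
        · rintro ⟨u, w⟩ - ⟨u₁, r₁⟩ ⟨-, rfl, h₁⟩ ⟨u₂, r₂⟩ ⟨-, rfl, h₂⟩
          exact congrArg (u, ·) (hB.third_unique (third_swap (third_rotate (third_rotate h₁)))
            (third_swap (third_rotate (third_rotate h₂))))
    _ ≤ 2 * (#(S \ T) * #(T \ S)) := by
        refine (card_union_le _ _).trans ?_
        rw [card_product, card_product, mul_comm #(T \ S), two_mul]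

section Order17

variable {B : Finset (Finset (Fin 17))} {S T : Finset (Fin 17)} {x y : Fin 17}

theorem isFano.card_inter_eq_three (hS : isFano B S) (hT : isFano B T) (hB : isPTS B)
    (h44 : #B = 44) (hST : S ≠ T) : #(S ∩ T) = 3 := by
  have hle := hS.card_inter_le_three hT hB hST
  by_contra hne
  have hlt : #(S ∩ T) < 2 := by
    by_contra! h
    exact hne (hle.antisymm (hS.three_le_card_inter hT hB h))
  have hST' := hS.card_sdiff_add_card_inter (T := T)
  have hTS' := hT.card_sdiff_add_card_inter (T := S)
  rw [inter_comm] at hTS'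
  obtain ⟨N, hN, -, hnbr⟩ := exists_card_eq_four_degree_eq_two
    (hB.card_edgeFinset_leaveGraph h44) (even_degree_leaveGraph hB (by decide))
  obtain ⟨x, hx, hxN⟩ : ∃ x ∈ S \ T, x ∉ N := exists_mem_notMem_of_card_lt_card (by omega)
  have hcompl := hS.card_sdiff_le_card_compl hT hB hx fun y hxy =>
    hxN (hnbr y (((leaveGraph B).mem_neighborFinset y x).2 hxy.symm))
  have hunion := card_union_add_card_inter S T
  rw [card_compl, Fintype.card_fin] at hcompl
  rw [hS.1, hT.1] at hunion
  omega

theorem isFano.mem_union_iff_notMem_union_of_adj (hS : isFano B S) (hT : isFano B T)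
    (hB : isPTS B) (h44 : #B = 44) (hST : S ≠ T) (hxy : (leaveGraph B).Adj x y) :
    x ∈ S ∪ T ↔ y ∉ S ∪ T := by
  refine mem_iff_notMem_of_card_edgeFinset_le_card_interedges ?_ hxy
  have hST3 := hS.card_inter_eq_three hT hB h44 hST
  have hST' : #(S \ T) = 4 := by
    have := hS.card_sdiff_add_card_inter (T := T)
    omega
  have hTS' : #(T \ S) = 4 := by
    have := hT.card_sdiff_add_card_inter (T := S)
    rw [inter_comm] at this
    omega
  have hunion : #(S ∪ T) = 11 := by
    have := card_union_add_card_inter S T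
    rw [hS.1, hT.1, hST3] at this
    omega
  have hcross := hB.card_mul_card_compl_le (S ∪ T)
  have hcompl := hB.card_crossPairs_compl_le (S ∪ T)
  have hinner := hS.card_crossPairs_union_le hT hB
  rw [offDiag_card, card_compl, Fintype.card_fin, hunion] at hcompl
  rw [card_compl, Fintype.card_fin, hunion] at hcross
  rw [hST', hTS'] at hinner
  have := hB.card_edgeFinset_leaveGraph h44
  omega

end Order17

/-! ### Triples disjoint from a plane -/

/-- `B` has order 17, 44 triples and the 4-cycle `a b c d` as its leave, labelled in such a way
that every Fano plane avoids `b` and `d`. -/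
structure IsLabelled (B : Finset (Finset (Fin 17))) (a b c d : Fin 17) : Prop where
  isPTS : isPTS B
  card_eq : #B = 44
  isFourCycle : IsFourCycle (leaveGraph B) a b c d
  notMem_b : ∀ S, isFano B S → b ∉ S
  notMem_d : ∀ S, isFano B S → d ∉ S

section Order17

variable {B : Finset (Finset (Fin 17))} {S T U V : Finset (Fin 17)} {a b c d p v x y : Fin 17}

theorem isFano.notMem_of_adj (hS : isFano B S) (hT : isFano B T) (hU : isFano B U) (hB : isPTS B)
    (h44 : #B = 44) (hST : S ≠ T) (ha : a ∈ S ∪ T) (hav : (leaveGraph B).Adj a v) : v ∉ U := by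
  intro hv
  have hvST := (hS.mem_union_iff_notMem_union_of_adj hT hB h44 hST hav).1 ha
  rw [mem_union, not_or] at hvST
  have hUS := hU.mem_union_iff_notMem_union_of_adj hS hB h44 (by rintro rfl; exact hvST.1 hv) hav
  have hUT := hU.mem_union_iff_notMem_union_of_adj hT hB h44 (by rintro rfl; exact hvST.2 hv) hav
  simp only [mem_union] at ha hUS hUT
  tauto

theorem exists_isLabelled (hB : isPTS B) (h44 : #B = 44) (hS : isFano B S) (hT : isFano B T)
    (hST : S ≠ T) : ∃ a b c d, IsLabelled B a b c d := by
  have hlabel : ∀ {a b c d}, IsFourCycle (leaveGraph B) a b c d → a ∈ S ∪ T →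
      IsLabelled B a b c d := fun hC ha => ⟨hB, h44, hC,
    fun U hU => hS.notMem_of_adj hT hU hB h44 hST ha hC.adj,
    fun U hU => hS.notMem_of_adj hT hU hB h44 hST ha hC.rotate.rotate.rotate.adj.symm⟩
  obtain ⟨a, b, c, d, hC⟩ := hB.exists_isFourCycle_leaveGraph h44
  by_cases ha : a ∈ S ∪ T
  · exact ⟨a, b, c, d, hlabel hC ha⟩
  · refine ⟨b, c, d, a, hlabel hC.rotate ?_⟩
    exact (hS.mem_union_iff_notMem_union_of_adj hT hB h44 hST hC.adj.symm).2 ha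

namespace IsLabelled

theorem reverse (h : IsLabelled B a b c d) : IsLabelled B c d a b :=
  ⟨h.isPTS, h.card_eq, h.isFourCycle.rotate.rotate, h.notMem_d, h.notMem_b⟩

theorem card_inter (h : IsLabelled B a b c d) (hS : isFano B S) (hT : isFano B T) (hST : S ≠ T) :
    #(S ∩ T) = 3 := hS.card_inter_eq_three hT h.isPTS h.card_eq hST

theorem mem_or_mem (h : IsLabelled B a b c d) (hS : isFano B S) (hT : isFano B T) (hST : S ≠ T) :
    a ∈ S ∨ a ∈ T := by
  rw [← mem_union, hS.mem_union_iff_notMem_union_of_adj hT h.isPTS h.card_eq hST h.isFourCycle.adj,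
    mem_union, not_or]
  exact ⟨h.notMem_b S hS, h.notMem_b T hT⟩

theorem two_mul_card_neighborFinset_inter (h : IsLabelled B a b c d) (haU : a ∉ U)
    (hcU : c ∈ U) (hp : p ∉ U) (hpa : p ≠ a) :
    2 * #((leaveGraph B).neighborFinset p ∩ U) = (leaveGraph B).degree p := by
  have hac := h.isFourCycle.ne_ac
  by_cases hpbd : p = b ∨ p = d
  · have hN : (leaveGraph B).neighborFinset p = {a, c} := by
      ext v
      rw [SimpleGraph.mem_neighborFinset, mem_insert, mem_singleton]
      rcases hpbd with rfl | rfl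
      · rw [h.isFourCycle.rotate.adj_left_iff, or_comm]
      · rw [h.isFourCycle.rotate.rotate.rotate.adj_left_iff]
    rw [← SimpleGraph.card_neighborFinset_eq_degree, hN, insert_inter_of_notMem haU,
      singleton_inter_of_mem hcU, card_pair hac, card_singleton]
  · have hN : (leaveGraph B).neighborFinset p = ∅ := by
      refine eq_empty_of_forall_notMem fun v hv => ?_
      have hpc : p ≠ c := (ne_of_mem_of_not_mem hcU hp).symm
      have := h.isFourCycle.mem_of_adj ((SimpleGraph.mem_neighborFinset _ _ _).1 hv)
      tauto
    rw [← SimpleGraph.card_neighborFinset_eq_degree, hN, empty_inter, card_empty]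

theorem notMem_of_disjoint (h : IsLabelled B a b c d) (hS : isFano B S) (hU : isFano B U)
    (hSU : S ≠ U) (hT : T ∈ B) (hTU : Disjoint T U) (hx : x ∈ T) (hxS : x ∈ S) (hy : y ∈ T)
    (hxy : x ≠ y) : y ∉ S := fun hyS =>
  hS.not_disjoint_of_subset hU h.isPTS (h.card_inter hS hU hSU) hT
    (hS.subset_of_mem h.isPTS hT hxy hxS hyS hx hy) hTU

variable (h : IsLabelled B a b c d) (hU : isFano B U) (haU : a ∉ U)
include h hU haU

theorem card_filter_disjoint_eq_zero : #{T ∈ triplesThrough B a | Disjoint T U} = 0 := by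
  have hN : (leaveGraph B).neighborFinset a = {b, d} := by
    ext v
    simp [h.isFourCycle.adj_left_iff]
  have hdeg : (leaveGraph B).degree a = 2 := by
    rw [← SimpleGraph.card_neighborFinset_eq_degree, hN, card_pair h.isFourCycle.ne_bd]
  have hNU : (leaveGraph B).neighborFinset a ∩ U = ∅ := by
    rw [hN, ← disjoint_iff_inter_eq_empty]
    simp [h.notMem_b U hU, h.notMem_d U hU]
  have hcount := hU.card_neighborFinset_inter_add_card_triplesThrough h.isPTS haU
  have hstar := degree_add_two_mul_card_triplesThrough h.isPTS a
  rw [hNU, card_empty] at hcount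
  omega

theorem card_filter_disjoint_eq_one (hcU : c ∈ U) (hp : p ∉ U) (hpa : p ≠ a) :
    #{T ∈ triplesThrough B p | Disjoint T U} = 1 := by
  have hN := h.two_mul_card_neighborFinset_inter haU hcU hp hpa
  have hcount := hU.card_neighborFinset_inter_add_card_triplesThrough h.isPTS hp
  have hstar := degree_add_two_mul_card_triplesThrough h.isPTS p
  omega

theorem exists_disjoint (hcU : c ∈ U) (hp : p ∉ U) (hpa : p ≠ a) :
    ∃ T ∈ B, p ∈ T ∧ Disjoint T U := by
  obtain ⟨T, hT⟩ := card_pos.1 (h.card_filter_disjoint_eq_one hU haU hcU hp hpa ▸ Nat.one_pos)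
  rw [mem_filter, mem_triplesThrough] at hT
  exact ⟨T, hT.1.1, hT.1.2, hT.2⟩

theorem eq_of_disjoint (hcU : c ∈ U) (hS : S ∈ B) (hT : T ∈ B) (hSU : Disjoint S U)
    (hTU : Disjoint T U) (hp : p ∉ U) (hpa : p ≠ a) (hpS : p ∈ S) (hpT : p ∈ T) : S = T := by
  refine card_le_one.1 (h.card_filter_disjoint_eq_one hU haU hcU hp hpa).le S ?_ T ?_ <;>
    rw [mem_filter, mem_triplesThrough]
  · exact ⟨⟨hS, hpS⟩, hSU⟩
  · exact ⟨⟨hT, hpT⟩, hTU⟩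

theorem sum_card_inter_disjoint (hcU : c ∈ U) (hSU : Disjoint S U) (haS : a ∉ S) :
    ∑ T ∈ B with Disjoint T U, #(S ∩ T) = #S := by
  rw [← mul_one #S]
  refine sum_card_inter fun p hp => ?_
  rw [← h.card_filter_disjoint_eq_one hU haU hcU (disjoint_left.1 hSU hp)
    (ne_of_mem_of_not_mem hp haS), triplesThrough, filter_filter, filter_filter]
  simp only [and_comm]

theorem card_triples_disjoint (hcU : c ∈ U) : #{T ∈ B | Disjoint T U} = 3 := by
  have hsum := h.sum_card_inter_disjoint (S := Uᶜ.erase a) hU haU hcU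
    (disjoint_compl_left.mono_left (erase_subset _ _)) (notMem_erase _ _)
  rw [sum_const_nat (m := 3), card_erase_of_mem (mem_compl.2 haU), card_compl, hU.1,
    Fintype.card_fin] at hsum
  · omega
  · intro T hT
    rw [mem_filter] at hT
    have haT : a ∉ T := fun haT => by
      have hmem : T ∈ ({T ∈ triplesThrough B a | Disjoint T U} : Finset _) :=
        mem_filter.2 ⟨mem_triplesThrough.2 ⟨hT.1, haT⟩, hT.2⟩
      rw [card_eq_zero.1 (h.card_filter_disjoint_eq_zero hU haU)] at hmem
      exact notMem_empty _ hmem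
    rw [inter_eq_right.2 (subset_erase.2 ⟨subset_compl_iff_disjoint_right.2 hT.2, haT⟩),
      h.isPTS.1 T hT.1]

theorem exists_mem_of_disjoint (hcU : c ∈ U) (hV : isFano B V) (haV : a ∈ V) (hT : T ∈ B)
    (hTU : Disjoint T U) : ∃ v ∈ T, v ∈ V := by
  have hVU : #(V ∩ U) = 3 := h.card_inter hV hU (by rintro rfl; exact haU haV)
  have hle : ∀ S ∈ ({T ∈ B | Disjoint T U} : Finset _), #((V \ U).erase a ∩ S) ≤ 1 := by
    intro S hS
    rw [mem_filter] at hS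
    have hSV : ¬ S ⊆ V := fun hSV => hV.not_disjoint_of_subset hU h.isPTS hVU hS.1 hSV hS.2
    exact (card_le_card (inter_subset_inter_right ((erase_subset _ _).trans sdiff_subset))).trans
      (hV.card_inter_le_one h.isPTS hS.1 hSV)
  have hsum : ∑ S ∈ B with Disjoint S U, #((V \ U).erase a ∩ S) =
      ∑ S ∈ B with Disjoint S U, 1 := by
    have := hV.card_sdiff_add_card_inter (T := U)
    rw [h.sum_card_inter_disjoint hU haU hcU (disjoint_sdiff_self_left.mono_left
      (erase_subset _ _)) (notMem_erase _ _), card_erase_of_mem (mem_sdiff.2 ⟨haV, haU⟩),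
      ← card_eq_sum_ones, h.card_triples_disjoint hU haU hcU]
    omega
  have hone := (sum_eq_sum_iff_of_le hle).1 hsum T (mem_filter.2 ⟨hT, hTU⟩)
  obtain ⟨v, hv⟩ := card_pos.1 (hone ▸ Nat.one_pos)
  rw [mem_inter] at hv
  exact ⟨v, hv.2, (mem_sdiff.1 (mem_of_mem_erase hv.1)).1⟩

end IsLabelled

end Order17

/-! ### Crossed planes -/

theorem card_inter_union_add_card_inter {α : Type*} [DecidableEq α] (S T X : Finset α) :
    #(X ∩ (S ∪ T)) + #(S ∩ T ∩ X) = #(X ∩ S) + #(X ∩ T) := by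
  rw [inter_union_distrib_left, inter_comm (S ∩ T), inter_inter_distrib_left,
    card_union_add_card_inter]

/-- Two Fano planes `S₁` and `S₂` through the opposite corners `a` and `c` of the leave, a plane
`U` missing `a` and a plane `V` missing `c`. No system contains such planes. -/
structure CrossedPlanes (B : Finset (Finset (Fin 17))) (a b c d : Fin 17)
    (S₁ S₂ U V : Finset (Fin 17)) : Prop extends IsLabelled B a b c d where
  isFano_fst : isFano B S₁
  isFano_snd : isFano B S₂
  isFano_left : isFano B U
  isFano_right : isFano B V
  fst_ne_snd : S₁ ≠ S₂
  mem_fst : a ∈ S₁ ∧ c ∈ S₁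
  mem_snd : a ∈ S₂ ∧ c ∈ S₂
  mem_left : a ∉ U ∧ c ∈ U
  mem_right : c ∉ V ∧ a ∈ V

section Order17

variable {B : Finset (Finset (Fin 17))} {S₁ S₂ T U V : Finset (Fin 17)}
  {a b c d e v w x y z : Fin 17}

namespace CrossedPlanes

theorem swap (h : CrossedPlanes B a b c d S₁ S₂ U V) : CrossedPlanes B a b c d S₂ S₁ U V :=
  ⟨h.toIsLabelled, h.isFano_snd, h.isFano_fst, h.isFano_left, h.isFano_right, h.fst_ne_snd.symm,
    h.mem_snd, h.mem_fst, h.mem_left, h.mem_right⟩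

theorem reverse (h : CrossedPlanes B a b c d S₁ S₂ U V) : CrossedPlanes B c d a b S₁ S₂ V U :=
  ⟨h.toIsLabelled.reverse, h.isFano_fst, h.isFano_snd, h.isFano_right, h.isFano_left,
    h.fst_ne_snd, h.mem_fst.symm, h.mem_snd.symm, h.mem_right, h.mem_left⟩

variable (h : CrossedPlanes B a b c d S₁ S₂ U V)
include h

theorem fst_ne_left : S₁ ≠ U := by
  rintro rfl
  exact h.mem_left.1 h.mem_fst.1

theorem fst_ne_right : S₁ ≠ V := h.reverse.fst_ne_left

theorem snd_ne_right : S₂ ≠ V := h.swap.fst_ne_right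

theorem left_ne_right : U ≠ V := by
  rintro rfl
  exact h.mem_right.1 h.mem_left.2

theorem card_left_inter_fst : #(U ∩ S₁) = 3 :=
  h.card_inter h.isFano_left h.isFano_fst h.fst_ne_left.symm

theorem card_left_inter_right : #(U ∩ V) = 3 :=
  h.card_inter h.isFano_left h.isFano_right h.left_ne_right

theorem card_fst_inter_snd_inter_left : #(S₁ ∩ S₂ ∩ U) = 1 :=
  h.isFano_fst.card_inter_inter_eq_one h.isFano_snd h.isFano_left h.isPTS
    (h.card_inter h.isFano_fst h.isFano_snd h.fst_ne_snd)
    (h.card_inter h.isFano_fst h.isFano_left h.fst_ne_left)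
    fun hsub => h.mem_left.1 (hsub (mem_inter.2 ⟨h.mem_fst.1, h.mem_snd.1⟩))

theorem card_left_inter_right_inter_fst : #(U ∩ V ∩ S₁) = 1 := by
  rw [inter_right_comm]
  exact h.isFano_left.card_inter_inter_eq_one h.isFano_fst h.isFano_right h.isPTS
    h.card_left_inter_fst h.card_left_inter_right
    fun hsub => h.mem_right.1 (hsub (mem_inter.2 ⟨h.mem_left.2, h.mem_fst.2⟩))

theorem inter_eq_empty : S₁ ∩ S₂ ∩ (U ∩ V) = ∅ := by
  obtain ⟨v, hv⟩ := card_eq_one.1 h.card_fst_inter_snd_inter_left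
  have hcv : c = v := mem_singleton.1 <| hv ▸
    mem_inter.2 ⟨mem_inter.2 ⟨h.mem_fst.2, h.mem_snd.2⟩, h.mem_left.2⟩
  rw [← inter_assoc, hv, ← hcv, singleton_inter_of_notMem h.mem_right.1]

theorem card_left_inter_union : #(U ∩ (S₁ ∪ S₂)) = 5 := by
  have := card_inter_union_add_card_inter S₁ S₂ U
  rw [h.card_fst_inter_snd_inter_left, h.card_left_inter_fst, h.swap.card_left_inter_fst] at this
  omega

theorem card_left_inter_right_inter_union : #(U ∩ V ∩ (S₁ ∪ S₂)) = 2 := by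
  have := card_inter_union_add_card_inter S₁ S₂ (U ∩ V)
  rwa [h.inter_eq_empty, card_empty, h.card_left_inter_right_inter_fst,
    h.swap.card_left_inter_right_inter_fst] at this

theorem card_left_inter_union_sdiff_right : #((U ∩ (S₁ ∪ S₂)) \ V) = 3 := by
  have := Finset.card_sdiff_add_card_inter (U ∩ (S₁ ∪ S₂)) V
  rw [h.card_left_inter_union, inter_right_comm, h.card_left_inter_right_inter_union] at this
  omega

theorem card_left_sdiff : #(U \ (S₁ ∪ S₂ ∪ V)) = 1 := by
  have hinter := card_inter_union_add_card_inter (S₁ ∪ S₂) V U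
  have hsdiff := h.isFano_left.card_sdiff_add_card_inter (T := S₁ ∪ S₂ ∪ V)
  rw [inter_assoc, inter_comm (S₁ ∪ S₂), inter_comm V, h.card_left_inter_right_inter_union,
    h.card_left_inter_union, h.card_left_inter_right] at hinter
  omega

theorem card_compl_union : #(S₁ ∪ S₂ ∪ U ∪ V)ᶜ = 3 := by
  have hSS := card_union_add_card_inter S₁ S₂
  have hSU := card_union_add_card_inter (S₁ ∪ S₂) U
  have hUV := card_sdiff_add_card V (S₁ ∪ S₂ ∪ U)
  have hV := h.reverse.card_left_sdiff
  rw [h.isFano_fst.1, h.isFano_snd.1,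
    h.card_inter h.isFano_fst h.isFano_snd h.fst_ne_snd] at hSS
  rw [inter_comm, h.card_left_inter_union, h.isFano_left.1] at hSU
  rw [card_compl, Fintype.card_fin, union_comm]
  omega

theorem eq_of_mem_fst_of_mem_left (hx₁ : x ∈ S₁) (hxU : x ∈ U) (hxV : x ∉ V) (hxc : x ≠ c)
    (hy₁ : y ∈ S₁) (hyU : y ∈ U) (hyV : y ∉ V) (hyc : y ≠ c) : x = y := by
  have hcard := Finset.card_sdiff_add_card_inter (U ∩ S₁) V
  rw [inter_right_comm, h.card_left_inter_right_inter_fst, h.card_left_inter_fst] at hcard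
  have hc : c ∈ (U ∩ S₁) \ V :=
    mem_sdiff.2 ⟨mem_inter.2 ⟨h.mem_left.2, h.mem_fst.2⟩, h.mem_right.1⟩
  have herase := card_erase_of_mem hc
  refine card_le_one.1 (show #(((U ∩ S₁) \ V).erase c) ≤ 1 by omega) x ?_ y ?_ <;>
    simp only [mem_erase, mem_sdiff, mem_inter, not_false_eq_true, and_self, *, ne_eq]

theorem eq_of_mem_left (hxU : x ∈ U) (hx₁ : x ∉ S₁) (hx₂ : x ∉ S₂) (hxV : x ∉ V)
    (hyU : y ∈ U) (hy₁ : y ∉ S₁) (hy₂ : y ∉ S₂) (hyV : y ∉ V) : x = y := by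
  refine card_le_one.1 h.card_left_sdiff.le x ?_ y ?_ <;>
    simp only [mem_sdiff, mem_union, or_self, not_false_eq_true, and_self, *]

theorem exists_mem_inter_notMem : ∃ e ∈ S₁ ∩ S₂, e ∉ U ∧ e ∉ V := by
  have hcard := card_sdiff_add_card_inter (S₁ ∩ S₂) (U ∪ V)
  have hunion := card_inter_union_add_card_inter U V (S₁ ∩ S₂)
  rw [h.card_inter h.isFano_fst h.isFano_snd h.fst_ne_snd] at hcard
  rw [h.card_fst_inter_snd_inter_left, h.reverse.card_fst_inter_snd_inter_left] at hunion
  obtain ⟨e, he⟩ := card_pos.1 (show 0 < #((S₁ ∩ S₂) \ (U ∪ V)) by omega)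
  rw [mem_sdiff, mem_union, not_or] at he
  exact ⟨e, he⟩

theorem exists_disjoint_right (hxU : x ∉ U) (hxV : x ∉ V) :
    ∃ T ∈ B, x ∈ T ∧ Disjoint T V ∧ ∃ y ∈ T, y ∈ U := by
  obtain ⟨T, hT, hxT, hTV⟩ := h.toIsLabelled.reverse.exists_disjoint h.isFano_right h.mem_right.1
    h.mem_right.2 hxV (ne_of_mem_of_not_mem h.mem_left.2 hxU).symm
  exact ⟨T, hT, hxT, hTV, h.toIsLabelled.reverse.exists_mem_of_disjoint h.isFano_right
    h.mem_right.1 h.mem_right.2 h.isFano_left h.mem_left.2 hT hTV⟩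

theorem third_notMem_snd (he : e ∈ S₁ ∩ S₂) (heU : e ∉ U) (heV : e ∉ V) (hz₁ : z ∉ S₁)
    (hz₂ : z ∉ S₂) (hzU : z ∉ U) (hzV : z ∈ V) (hy₁ : y ∈ S₁) (hyU : y ∈ U) (hyV : y ∉ V)
    (hyzw : {y, z, w} ∈ B) : w ∉ S₂ := by
  intro hw₂
  rw [mem_inter] at he
  obtain ⟨-, hyw, -⟩ := h.isPTS.third_ne hyzw
  have hwyz := third_rotate (third_rotate hyzw)
  have hy₂ : y ∉ S₂ := fun hy₂ => hz₂ (h.isFano_snd.third_mem h.isPTS hwyz hw₂ hy₂)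
  have hw₁ : w ∉ S₁ := fun hw₁ => hz₁ (h.isFano_fst.third_mem h.isPTS hwyz hw₁ hy₁)
  have hwU : w ∉ U := fun hwU => hzU (h.isFano_left.third_mem h.isPTS hwyz hwU hyU)
  have hwV : w ∉ V := fun hwV => hyV
    (h.isFano_right.third_mem h.isPTS (third_rotate hyzw) hzV hwV)
  have hc {x} (hx : x ∉ S₂) : x ≠ c := (ne_of_mem_of_not_mem h.mem_snd.2 hx).symm
  obtain ⟨R, hR, hwR, hRV, u, huR, huU⟩ := h.exists_disjoint_right hwU hwV
  obtain ⟨T, hT, heT, hTV, v, hvT, hvU⟩ := h.exists_disjoint_right heU heV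
  have hu₂ : u ∉ S₂ := h.notMem_of_disjoint h.isFano_snd h.isFano_right h.snd_ne_right hR hRV
    hwR hw₂ huR (ne_of_mem_of_not_mem huU hwU).symm
  have huV : u ∉ V := disjoint_left.1 hRV huR
  by_cases hu₁ : u ∈ S₁
  · obtain rfl := h.eq_of_mem_fst_of_mem_left hu₁ huU huV (hc hu₂) hy₁ hyU hyV (hc hy₂)
    obtain rfl := h.isPTS.eq_of_mem hR hyzw hyw huR hwR (by simp) (by simp)
    exact disjoint_left.1 hRV (show z ∈ _ by simp) hzV
  · have hev : e ≠ v := (ne_of_mem_of_not_mem hvU heU).symm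
    have hv₁ := h.notMem_of_disjoint h.isFano_fst h.isFano_right h.fst_ne_right hT hTV heT he.1
      hvT hev
    have hv₂ := h.notMem_of_disjoint h.isFano_snd h.isFano_right h.snd_ne_right hT hTV heT he.2
      hvT hev
    obtain rfl := h.eq_of_mem_left huU hu₁ hu₂ huV hvU hv₁ hv₂ (disjoint_left.1 hTV hvT)
    obtain rfl := h.reverse.eq_of_disjoint h.isFano_right h.mem_right.1 h.mem_right.2 hR hT hRV
      hTV huV (hc hu₂) huR hvT
    exact h.notMem_of_disjoint h.isFano_snd h.isFano_right h.snd_ne_right hT hTV heT he.2 hwR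
      (ne_of_mem_of_not_mem he.1 hw₁) hw₂

theorem exists_third_mem_compl_of_mem_fst (he : e ∈ S₁ ∩ S₂) (heU : e ∉ U) (heV : e ∉ V)
    (hz₁ : z ∉ S₁) (hz₂ : z ∉ S₂) (hzU : z ∉ U) (hzV : z ∈ V) (hy₁ : y ∈ S₁) (hyU : y ∈ U)
    (hyV : y ∉ V) : ∃ w ∈ (S₁ ∪ S₂ ∪ U ∪ V)ᶜ, {z, y, w} ∈ B := by
  have hadj : ¬ (leaveGraph B).Adj z y := fun hadj => by
    rcases h.isFourCycle.mem_of_adj hadj with rfl | rfl | rfl | rfl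
    exacts [hz₁ h.mem_fst.1, h.notMem_b V h.isFano_right hzV, hz₁ h.mem_fst.2,
      h.notMem_d V h.isFano_right hzV]
  obtain ⟨w, hzyw⟩ := exists_third_of_not_adj h.isPTS (ne_of_mem_of_not_mem hzV hyV) hadj
  have hyzw := third_swap hzyw
  have hwyz := third_rotate (third_rotate hyzw)
  refine ⟨w, ?_, hzyw⟩
  simp only [mem_compl, mem_union, not_or]
  exact ⟨⟨⟨fun hw => hz₁ (h.isFano_fst.third_mem h.isPTS hwyz hw hy₁),
    h.third_notMem_snd he heU heV hz₁ hz₂ hzU hzV hy₁ hyU hyV hyzw⟩,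
    fun hw => hzU (h.isFano_left.third_mem h.isPTS hwyz hw hyU)⟩,
    fun hw => hyV (h.isFano_right.third_mem h.isPTS (third_rotate (third_rotate hzyw)) hw hzV)⟩

theorem exists_third_mem_compl (he : e ∈ S₁ ∩ S₂) (heU : e ∉ U) (heV : e ∉ V)
    (hz₁ : z ∉ S₁) (hz₂ : z ∉ S₂) (hzU : z ∉ U) (hzV : z ∈ V)
    (hy : y ∈ (U ∩ (S₁ ∪ S₂)) \ V) : ∃ w ∈ (S₁ ∪ S₂ ∪ U ∪ V)ᶜ, {z, y, w} ∈ B := by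
  rw [mem_sdiff, mem_inter, mem_union] at hy
  obtain ⟨⟨hyU, hy₁ | hy₂⟩, hyV⟩ := hy
  · exact h.exists_third_mem_compl_of_mem_fst he heU heV hz₁ hz₂ hzU hzV hy₁ hyU hyV
  · rw [inter_comm] at he
    rw [union_comm S₁]
    exact h.swap.exists_third_mem_compl_of_mem_fst he heU heV hz₂ hz₁ hzU hzV hy₂ hyU hyV

theorem exists_triple_mem_compl (he : e ∈ S₁ ∩ S₂) (heU : e ∉ U) (heV : e ∉ V) :
    ∃ z ∈ V, z ∉ S₁ ∧ z ∉ S₂ ∧ z ∉ U ∧ ∃ w ∈ (S₁ ∪ S₂ ∪ U ∪ V)ᶜ, {z, e, w} ∈ B := by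
  rw [mem_inter] at he
  obtain ⟨T, hT, heT, hTU, z, hzT, hzV⟩ := h.reverse.exists_disjoint_right heV heU
  have hez : e ≠ z := (ne_of_mem_of_not_mem hzV heV).symm
  obtain ⟨w, rfl⟩ := h.isPTS.exists_eq_third hT hez.symm hzT heT
  obtain ⟨-, -, hew⟩ := h.isPTS.third_ne hT
  have hw : w ∈ ({z, e, w} : Finset (Fin 17)) := by simp
  have hfst {v} := h.notMem_of_disjoint (y := v) h.isFano_fst h.isFano_left h.fst_ne_left hT hTU
    heT he.1
  have hsnd {v} := h.notMem_of_disjoint (y := v) h.isFano_snd h.isFano_left h.swap.fst_ne_left hT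
    hTU heT he.2
  refine ⟨z, hzV, hfst hzT hez, hsnd hzT hez, disjoint_left.1 hTU hzT, w, ?_, hT⟩
  simp only [mem_compl, mem_union, not_or]
  exact ⟨⟨⟨hfst hw hew, hsnd hw hew⟩, disjoint_left.1 hTU hw⟩, fun hwV =>
    heV (h.isFano_right.third_mem h.isPTS (third_rotate (third_rotate hT)) hwV hzV)⟩

theorem elim : False := by
  obtain ⟨e, he, heU, heV⟩ := h.exists_mem_inter_notMem
  obtain ⟨z, hzV, hz₁, hz₂, hzU, hzew⟩ := h.exists_triple_mem_compl he heU heV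
  -- Joining `z` to `e` and to the three points of `U ∩ (S₁ ∪ S₂)` off `V` would need four distinct
  -- points outside the planes, but there are only three.
  have hle : #(insert e ((U ∩ (S₁ ∪ S₂)) \ V)) ≤ #(S₁ ∪ S₂ ∪ U ∪ V)ᶜ := by
    refine h.isPTS.card_le_card_of_forall_exists_third (p := z) fun q hq => ?_
    obtain rfl | hq := mem_insert.1 hq
    · exact hzew
    · exact h.exists_third_mem_compl he heU heV hz₁ hz₂ hzU hzV hq
  rw [card_insert_of_notMem (by simp [heU]), h.card_left_inter_union_sdiff_right,
    h.card_compl_union] at hle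
  omega

end CrossedPlanes

end Order17

/-! ### Counting the Fano planes -/

open Classical in
/-- The Fano planes of `B`. -/
noncomputable def fanoPlanes (B : Finset (Finset (Fin n))) : Finset (Finset (Fin n)) :=
  {S | isFano B S}

theorem mem_fanoPlanes : S ∈ fanoPlanes B ↔ isFano B S := by
  simp only [fanoPlanes, mem_filter_univ]

theorem card_fanoPlanes : Nat.card {S // isFano B S} = #(fanoPlanes B) :=
  Nat.subtype_card _ fun _ => mem_fanoPlanes

/-- The Fano planes of `B` through both `a` and `c`. -/
noncomputable def fanoPlanesThrough (B : Finset (Finset (Fin n))) (a c : Fin n) :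
    Finset (Finset (Fin n)) :=
  {S ∈ fanoPlanes B | a ∈ S ∧ c ∈ S}

theorem mem_fanoPlanesThrough {a c : Fin n} :
    S ∈ fanoPlanesThrough B a c ↔ isFano B S ∧ a ∈ S ∧ c ∈ S := by
  rw [fanoPlanesThrough, mem_filter, mem_fanoPlanes]

section Order17

variable {B : Finset (Finset (Fin 17))} {S T U V : Finset (Fin 17)} {a b c d e w : Fin 17}

namespace IsLabelled

variable (h : IsLabelled B a b c d)
include h

theorem card_filter_notMem_le_one : #{S ∈ fanoPlanes B | a ∉ S} ≤ 1 := by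
  refine card_le_one.2 fun S hS T hT => ?_
  rw [mem_filter, mem_fanoPlanes] at hS hT
  by_contra hST
  exact (h.mem_or_mem hS.1 hT.1 hST).elim hS.2 hT.2

theorem card_fanoPlanes_le_add_two : #(fanoPlanes B) ≤ #(fanoPlanesThrough B a c) + 2 := by
  have hunion : #{S ∈ fanoPlanes B | ¬ (a ∈ S ∧ c ∈ S)} ≤ 2 := by
    simp only [not_and_or, filter_or]
    exact (card_union_le _ _).trans
      (Nat.add_le_add h.card_filter_notMem_le_one h.reverse.card_filter_notMem_le_one)
  rw [← card_filter_add_card_filter_not (s := fanoPlanes B) fun S => a ∈ S ∧ c ∈ S]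
  exact Nat.add_le_add_left hunion _

theorem not_crossed (h4 : 4 ≤ #(fanoPlanes B)) (hU : isFano B U) (hV : isFano B V) (haU : a ∉ U)
    (hcU : c ∈ U) (hcV : c ∉ V) (haV : a ∈ V) : False := by
  obtain ⟨S₁, hS₁, S₂, hS₂, hne⟩ := one_lt_card.1
    (show 1 < #(fanoPlanesThrough B a c) by have := h.card_fanoPlanes_le_add_two; omega)
  rw [mem_fanoPlanesThrough] at hS₁ hS₂
  exact CrossedPlanes.elim (S₁ := S₁) (S₂ := S₂)
    ⟨h, hS₁.1, hS₂.1, hU, hV, hne, hS₁.2, hS₂.2, ⟨haU, hcU⟩, ⟨hcV, haV⟩⟩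

theorem card_fanoPlanes_le_add_one (h4 : 4 ≤ #(fanoPlanes B)) :
    #(fanoPlanes B) ≤ #(fanoPlanesThrough B a c) + 1 := by
  suffices hle : #{S ∈ fanoPlanes B | ¬ (a ∈ S ∧ c ∈ S)} ≤ 1 by
    rw [← card_filter_add_card_filter_not (s := fanoPlanes B) fun S => a ∈ S ∧ c ∈ S]
    exact Nat.add_le_add_left hle _
  refine card_le_one.2 fun S hS T hT => ?_
  rw [mem_filter, mem_fanoPlanes] at hS hT
  by_contra hST
  have ha := h.mem_or_mem hS.1 hT.1 hST
  have hc := h.reverse.mem_or_mem hS.1 hT.1 hST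
  have hcross := h.not_crossed h4 hS.1 hT.1
  have hcross' := h.not_crossed h4 hT.1 hS.1
  tauto

theorem biUnion_sdiff_triple_subset :
    (fanoPlanesThrough B a c).biUnion (· \ {a, c, e}) ⊆ ({a, c, e} ∪ {b, d})ᶜ := by
  refine biUnion_subset.2 fun S hS => ?_
  have hS := (mem_fanoPlanesThrough.1 hS).1
  rw [subset_compl_iff_disjoint_right, disjoint_union_right]
  refine ⟨sdiff_disjoint, disjoint_of_subset_left sdiff_subset ?_⟩
  simp [h.notMem_b S hS, h.notMem_d S hS]

variable (hace : {a, c, e} ∈ B)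
include hace

theorem inter_eq_triple (hS : S ∈ fanoPlanesThrough B a c) (hT : T ∈ fanoPlanesThrough B a c)
    (hST : S ≠ T) : S ∩ T = {a, c, e} := by
  rw [mem_fanoPlanesThrough] at hS hT
  refine (eq_of_subset_of_card_le ?_ ?_).symm
  · simp [insert_subset_iff, hS.2, hT.2, hS.1.third_mem h.isPTS hace hS.2.1 hS.2.2,
      hT.1.third_mem h.isPTS hace hT.2.1 hT.2.2]
  · rw [h.card_inter hS.1 hT.1 hST, h.isPTS.1 _ hace]

theorem card_biUnion_sdiff_triple :
    #((fanoPlanesThrough B a c).biUnion (· \ {a, c, e})) = #(fanoPlanesThrough B a c) * 4 := by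
  rw [card_biUnion]
  · refine sum_const_nat fun S hS => ?_
    rw [mem_fanoPlanesThrough] at hS
    rw [card_sdiff_of_subset, hS.1.1, h.isPTS.1 _ hace]
    simp [insert_subset_iff, hS.2, hS.1.third_mem h.isPTS hace hS.2.1 hS.2.2]
  · intro S hS T hT hST
    rw [← h.inter_eq_triple hace hS hT hST, Function.onFun, disjoint_left]
    simp only [mem_sdiff, mem_inter]
    tauto

theorem card_compl_triple_union (hS : S ∈ fanoPlanesThrough B a c) :
    #({a, c, e} ∪ {b, d} : Finset (Fin 17))ᶜ = 12 := by
  rw [mem_fanoPlanesThrough] at hS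
  have hsub : {a, c, e} ⊆ S := by
    simp [insert_subset_iff, hS.2, hS.1.third_mem h.isPTS hace hS.2.1 hS.2.2]
  have hdisj : Disjoint ({a, c, e} : Finset (Fin 17)) {b, d} :=
    disjoint_of_subset_left hsub (by simp [h.notMem_b S hS.1, h.notMem_d S hS.1])
  rw [card_compl, card_union_of_disjoint hdisj, h.isPTS.1 _ hace, card_pair h.isFourCycle.ne_bd,
    Fintype.card_fin]

theorem card_fanoPlanesThrough_le_three : #(fanoPlanesThrough B a c) ≤ 3 := by
  obtain hempty | ⟨S, hS⟩ := (fanoPlanesThrough B a c).eq_empty_or_nonempty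
  · simp [hempty]
  · have := card_le_card (h.biUnion_sdiff_triple_subset (e := e))
    rw [h.card_biUnion_sdiff_triple hace, h.card_compl_triple_union hace hS] at this
    omega

theorem exists_mem_fanoPlanesThrough (h3 : #(fanoPlanesThrough B a c) = 3)
    (hw : w ∉ ({b, d} : Finset (Fin 17))) : ∃ S ∈ fanoPlanesThrough B a c, w ∈ S := by
  obtain ⟨S, hS⟩ := card_pos.1 (show 0 < #(fanoPlanesThrough B a c) by omega)
  by_cases hwL : w ∈ ({a, c, e} : Finset (Fin 17))
  · have hS' := mem_fanoPlanesThrough.1 hS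
    refine ⟨S, hS, ?_⟩
    simp only [mem_insert, mem_singleton] at hwL
    rcases hwL with rfl | rfl | rfl
    exacts [hS'.2.1, hS'.2.2, hS'.1.third_mem h.isPTS hace hS'.2.1 hS'.2.2]
  · have heq := eq_of_subset_of_card_le (h.biUnion_sdiff_triple_subset) (by
      rw [h.card_compl_triple_union hace hS, h.card_biUnion_sdiff_triple hace, h3])
    have hw' : w ∈ ({a, c, e} ∪ {b, d} : Finset (Fin 17))ᶜ := by
      rw [mem_compl, mem_union, not_or]
      exact ⟨hwL, hw⟩
    obtain ⟨T, hT, hwT⟩ := mem_biUnion.1 (heq ▸ hw')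
    exact ⟨T, hT, (mem_sdiff.1 hwT).1⟩

theorem isTypeQ (h3 : #(fanoPlanesThrough B a c) = 3) : isTypeQ B := by
  have heS : ∀ S ∈ fanoPlanesThrough B a c, isFano B S ∧ e ∈ S := fun S hS => by
    rw [mem_fanoPlanesThrough] at hS
    exact ⟨hS.1, hS.1.third_mem h.isPTS hace hS.2.1 hS.2.2⟩
  obtain ⟨S, hS⟩ := card_pos.1 (show 0 < #(fanoPlanesThrough B a c) by omega)
  have heb : e ≠ b := ne_of_mem_of_not_mem (heS S hS).2 (h.notMem_b S (heS S hS).1)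
  have hadj : ¬ (leaveGraph B).Adj e b := fun hadj => by
    obtain ⟨-, hae, hce⟩ := h.isPTS.third_ne hace
    rcases h.isFourCycle.mem_of_adj hadj with rfl | rfl | rfl | rfl
    exacts [hae rfl, heb rfl, hce rfl, h.notMem_d S (heS S hS).1 (heS S hS).2]
  obtain ⟨w, hebw⟩ := exists_third_of_not_adj h.isPTS heb hadj
  have hwd : w = d := by
    by_contra hwd
    obtain ⟨T, hT, hwT⟩ := h.exists_mem_fanoPlanesThrough hace h3 (w := w) (by
      simp [hwd, (h.isPTS.third_ne hebw).2.2.symm])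
    exact h.notMem_b T (heS T hT).1 ((heS T hT).1.third_mem h.isPTS
      (third_rotate (third_rotate hebw)) hwT (heS T hT).2)
  exact h.isFourCycle.isTypeQ hace (third_rotate (hwd ▸ hebw))

end IsLabelled

theorem isPTS.card_fanoPlanes_le_four_and_isTypeQ (hB : isPTS B) (h44 : #B = 44)
    (h4 : 4 ≤ #(fanoPlanes B)) : #(fanoPlanes B) ≤ 4 ∧ isTypeQ B := by
  obtain ⟨S, hS, T, hT, hST⟩ := one_lt_card.1 (show 1 < #(fanoPlanes B) by omega)
  obtain ⟨a, b, c, d, h⟩ :=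
    exists_isLabelled hB h44 (mem_fanoPlanes.1 hS) (mem_fanoPlanes.1 hT) hST
  have hle := h.card_fanoPlanes_le_add_one h4
  obtain ⟨U, hU⟩ := card_pos.1 (show 0 < #(fanoPlanesThrough B a c) by omega)
  rw [mem_fanoPlanesThrough] at hU
  obtain ⟨e, -, hace⟩ := hU.1.exists_third hB hU.2.1 hU.2.2 h.isFourCycle.ne_ac
  have h3 := h.card_fanoPlanesThrough_le_three hace
  exact ⟨by omega, h.isTypeQ hace (by omega)⟩

end Order17

/-! ### An extremal system -/

section Example

/-- The triples of `exampleSystem`, listed so that its properties can be decided by recursion on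
the list. -/
def exampleTriples : List (Finset (Fin 17)) :=
  [{0, 1, 2}, {1, 3, 4}, {1, 5, 6}, {0, 3, 5}, {0, 4, 6}, {2, 3, 6}, {2, 4, 5}, {1, 7, 8},
    {1, 9, 10}, {0, 7, 9}, {0, 8, 10}, {2, 7, 10}, {2, 8, 9}, {1, 11, 12}, {1, 13, 14}, {0, 11, 13},
    {0, 12, 14}, {2, 11, 14}, {2, 12, 13}, {3, 7, 11}, {3, 8, 12}, {4, 7, 12}, {4, 8, 11},
    {2, 15, 16}, {5, 7, 13}, {6, 7, 15}, {7, 14, 16}, {5, 8, 15}, {6, 8, 14}, {8, 13, 16},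
    {6, 9, 13}, {6, 10, 11}, {6, 12, 16}, {9, 11, 15}, {5, 11, 16}, {5, 9, 12}, {5, 10, 14},
    {10, 12, 15}, {3, 9, 14}, {4, 9, 16}, {4, 10, 13}, {3, 10, 16}, {3, 13, 15}, {4, 14, 15}]

/-- A system of order 17 with 44 triples and four Fano planes, showing that the bounds are
attained. -/
def exampleSystem : Finset (Finset (Fin 17)) :=
  exampleTriples.toFinset

/-- Four Fano planes of `exampleSystem`. -/
def examplePlanes : List (Finset (Fin 17)) :=
  [{0, 1, 2, 3, 4, 5, 6}, {0, 1, 2, 7, 8, 9, 10}, {0, 1, 2, 11, 12, 13, 14},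
    {1, 3, 4, 7, 8, 11, 12}]

theorem isPTS_exampleSystem : isPTS exampleSystem := by
  have hcard : exampleTriples.Forall (#· = 3) := by decide +kernel
  have hinter : exampleTriples.Pairwise fun T U => #(T ∩ U) ≤ 1 := by decide +kernel
  refine isPTS.of_card_inter_le_one (fun T hT => ?_) fun T hT U hU => ?_
  · exact List.forall_iff_forall_mem.1 hcard T (List.mem_toFinset.1 hT)
  · have : Std.Symm fun T U : Finset (Fin 17) => #(T ∩ U) ≤ 1 := ⟨fun T U h => inter_comm T U ▸ h⟩
    exact hinter.forall (List.mem_toFinset.1 hT) (List.mem_toFinset.1 hU)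

theorem card_exampleSystem : #exampleSystem = 44 := by decide +kernel

theorem isMMPTS_exampleSystem : isMMPTS exampleSystem :=
  ⟨isPTS_exampleSystem, fun _ hB => card_exampleSystem ▸ hB.card_le_forty_four⟩

theorem isFano_of_mem_examplePlanes {S : Finset (Fin 17)} (hS : S ∈ examplePlanes) :
    isFano exampleSystem S := by
  have hcard : examplePlanes.Forall fun S => #S = 7 ∧ 7 ≤ #{T ∈ exampleSystem | T ⊆ S} := by
    decide +kernel
  obtain ⟨h₇, hle⟩ := List.forall_iff_forall_mem.1 hcard S hS
  exact isPTS_exampleSystem.isFano_of_seven_le_card h₇ hle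

theorem four_le_card_fanoPlanes_exampleSystem : 4 ≤ #(fanoPlanes exampleSystem) := by
  have hcard : #examplePlanes.toFinset = 4 := by decide +kernel
  rw [← hcard]
  exact card_le_card fun S hS =>
    mem_fanoPlanes.2 (isFano_of_mem_examplePlanes (List.mem_toFinset.1 hS))

end Example

theorem isMMPTS.card_eq_forty_four {B : Finset (Finset (Fin 17))} (hB : isMMPTS B) : #B = 44 :=
  hB.1.card_le_forty_four.antisymm (card_exampleSystem ▸ hB.2 _ isPTS_exampleSystem)

theorem isMMPTS.card_fanoPlanes_le_four_and_isTypeQ {B : Finset (Finset (Fin 17))}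
    (hB : isMMPTS B) (h4 : 4 ≤ #(fanoPlanes B)) : #(fanoPlanes B) ≤ 4 ∧ isTypeQ B :=
  hB.1.card_fanoPlanes_le_four_and_isTypeQ hB.card_eq_forty_four h4

theorem mmpts17_fano_bounds :
    (∀ B : Finset (Finset (Fin 17)), isMMPTS B →
      Nat.card {S : Finset (Fin 17) // isFano B S} ≤ 4) ∧
    (∃ B : Finset (Finset (Fin 17)), isMMPTS B ∧ isTypeQ B ∧
      Nat.card {S : Finset (Fin 17) // isFano B S} = 4) ∧
    (∀ B : Finset (Finset (Fin 17)), isMMPTS B → ¬ isTypeQ B →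
      Nat.card {S : Finset (Fin 17) // isFano B S} ≤ 3) := by
  simp only [card_fanoPlanes]
  refine ⟨fun B hB => ?_, ?_, fun B hB hQ => ?_⟩
  · exact (le_total 4 #(fanoPlanes B)).elim
      (fun h4 => (hB.card_fanoPlanes_le_four_and_isTypeQ h4).1) id
  · obtain ⟨hle, hQ⟩ := isMMPTS_exampleSystem.card_fanoPlanes_le_four_and_isTypeQ
      four_le_card_fanoPlanes_exampleSystem
    exact ⟨exampleSystem, isMMPTS_exampleSystem, hQ,
      hle.antisymm four_le_card_fanoPlanes_exampleSystem⟩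
  · by_contra! h4
    exact hQ (hB.card_fanoPlanes_le_four_and_isTypeQ h4).2
end
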